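/- arXiv:1611.05314 — 8 statements merged into one kernel-verified Lean document; each statement's English description precedes it below -/
import Mathlib

section
/- Let P_1, …, P_m be nonempty compact subsets of ℝ^n and let L, L' be linear functionals on ℝ^n. For each i let A_i = {x ∈ P_i : ∀ y ∈ P_i, L(y) ≤ L(x)} and A_i' = {x ∈ P_i : ∀ y ∈ P_i, L'(y) ≤ L'(x)} be the sets of maximizers of L and L' over P_i. If A_1 + ⋯ + A_m = A_1' + ⋯ + A_m' as subsets of ℝ^n, then A_i = A_i' for every i. -/
open Pointwise

noncomputable section

/-- The simplex Δ_F ⊆ ℝ^n for F ⊆ {0,…,n−1}. -/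
def stdSimplexOn (n : ℕ) (F : Finset (Fin n)) : Set (Fin n → ℝ) :=
  {x | (∀ i, 0 ≤ x i) ∧ (∀ i, i ∉ F → x i = 0) ∧ ∑ i, x i = 1}

/-- The general permutahedron Π_{n−1}(k−1) ⊆ ℝ^n, Minkowski sum of all Δ_F with |F| = k. -/
def genPerm (n k : ℕ) : Set (Fin n → ℝ) :=
  ∑ F ∈ Finset.univ.powersetCard k, stdSimplexOn n F

/-- P_{n−1}(v): convex hull of the orbit of v under coordinate permutations. -/
def permPoly {n : ℕ} (v : Fin n → ℝ) : Set (Fin n → ℝ) :=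
  convexHull ℝ {w | ∃ σ : Equiv.Perm (Fin n), w = v ∘ σ}

/-- Dimension of a subset of ℝ^n : dimension of its affine span. -/
def setDim {n : ℕ} (S : Set (Fin n → ℝ)) : ℕ :=
  Module.finrank ℝ (affineSpan ℝ S).direction

/-- Nonempty exposed face of P : the maximizer set of some linear functional. -/
def IsExpFace {n : ℕ} (P A : Set (Fin n → ℝ)) : Prop :=
  A.Nonempty ∧ ∃ L : (Fin n → ℝ) →ₗ[ℝ] ℝ, A = {x ∈ P | ∀ y ∈ P, L y ≤ L x}

/-- Stirling numbers of the second kind. -/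
def stirling2 : ℕ → ℕ → ℕ
  | 0, 0 => 1
  | 0, _ + 1 => 0
  | _ + 1, 0 => 0
  | n + 1, k + 1 => (k + 1) * stirling2 n (k + 1) + stirling2 n k

/-- i-th backward difference of u at position k. -/
def bdiff {n : ℕ} (u : Fin n → ℝ) (i : ℕ) (k : Fin n) : ℝ :=
  ∑ j ∈ Finset.range (i + 1), (-1 : ℝ) ^ j * (i.choose j) *
    u ⟨(k : ℕ) - j, lt_of_le_of_lt (Nat.sub_le _ _) k.isLt⟩

/-- The number of chains A_1 ⊆ ⋯ ⊆ A_ℓ of nonempty exposed faces of P with dim A_i = s i. -/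
def flagCount {n : ℕ} (P : Set (Fin n → ℝ)) (l : ℕ) (s : Fin l → ℕ) : ℕ :=
  Nat.card {A : Fin l → Set (Fin n → ℝ) //
    (∀ i, IsExpFace P (A i) ∧ setDim (A i) = s i) ∧ ∀ i j, i ≤ j → A i ⊆ A j}

/-- The exponential (l+1)-flag polynomial of P ⊆ ℝ^n (a polytope of dimension n−1). -/
def xiFlag {n : ℕ} (P : Set (Fin n → ℝ)) (l : ℕ) (x : Fin (l + 1) → ℝ) : ℝ :=
  ∑ s : Fin (l + 1) → Fin n, if Monotone s then
    ((flagCount P (l + 1) (fun i => (s i : ℕ)) : ℝ) / (Nat.factorial (n - (s 0 : ℕ)))) *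
      ∏ i : Fin (l + 1), x i ^ (if (i : ℕ) = 0 then (s i : ℕ) else
        (s i : ℕ) - (s ⟨(i : ℕ) - 1, lt_of_le_of_lt (Nat.sub_le _ _) i.isLt⟩ : ℕ))
  else 0

/-- The standard permutahedron Π_{n−1} ⊆ ℝ^n. -/
def stdPermutahedron (n : ℕ) : Set (Fin n → ℝ) :=
  convexHull ℝ {w | ∃ σ : Equiv.Perm (Fin n), ∀ i, w i = ((σ i : ℕ) : ℝ) + 1}

/-- E_m(t) = ∑_{j=0}^m t^j/j!, the degree-m Taylor polynomial of exp. -/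
def Etaylor (m : ℕ) (t : ℝ) : ℝ :=
  ∑ j ∈ Finset.range (m + 1), t ^ j / (Nat.factorial j)

end

/-!
A sum of points `w i ∈ P i` on which an additive functional `f` attains the sum of its maxima over
the `P i` must have every `w i` a maximizer, since no summand can make up for the loss of another.
Complete a point of one face `A i` by points of the other faces `A j`: if `∑ A j = ∑ A' j`, the sum
is a sum of maximizers of the other functional, so the point lies in `A' i`.
-/

section Maximizers

/-- The points of `s` at which `f` attains its maximum over `s`. For a linear functional `f`, this
is the face of `s` exposed by `f`; it is empty when the maximum is not attained. -/
def maximizers {E R : Type*} [LE R] (f : E → R) (s : Set E) : Set E :=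
  {x ∈ s | ∀ y ∈ s, f y ≤ f x}

theorem maximizers_subset {E R : Type*} [LE R] (f : E → R) (s : Set E) : maximizers f s ⊆ s :=
  Set.sep_subset _ _

theorem maximizers_nonempty_of_isCompact {E R : Type*} [TopologicalSpace E] [LinearOrder R]
    {f : E → R} {s : Set E} (hs : IsCompact s) (hne : s.Nonempty)
    (hf : UpperSemicontinuousOn f s) : (maximizers f s).Nonempty :=
  hf.exists_isMaxOn hne hs

variable {ι E R F : Type*} [AddCommMonoid E]

theorem pi_nonempty_iff_forall_mem {α : ι → Type*} [∀ i, Nonempty (α i)] {s : Set ι}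
    {t : ∀ i, Set (α i)} : (s.pi t).Nonempty ↔ ∀ i ∈ s, (t i).Nonempty := by
  simp [Set.nonempty_iff_ne_empty, Set.pi_eq_empty_iff']

theorem set_sum_nonempty_iff {s : Finset ι} {B : ι → Set E} :
    (∑ i ∈ s, B i).Nonempty ↔ ∀ i ∈ s, (B i).Nonempty := by
  rw [← Set.image_finsetSum_pi, Set.image_nonempty, pi_nonempty_iff_forall_mem]
  rfl

variable [AddCommMonoid R] [PartialOrder R] [IsOrderedCancelAddMonoid R]
  [FunLike F E R] [AddMonoidHomClass F E R] {s : Finset ι} {P : ι → Set E}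

theorem mem_maximizers_of_sum_mem_sum_maximizers {f : F} {w : ι → E} (hw : ∀ i ∈ s, w i ∈ P i)
    (hsum : ∑ i ∈ s, w i ∈ ∑ i ∈ s, maximizers f (P i)) :
    ∀ i ∈ s, w i ∈ maximizers f (P i) := by
  obtain ⟨g, hg, hgw⟩ := (Set.mem_finsetSum ..).1 hsum
  have hle : ∀ i ∈ s, f (w i) ≤ f (g i) := fun i hi ↦ (hg hi).2 (w i) (hw i hi)
  have hsum_eq : ∑ i ∈ s, f (w i) = ∑ i ∈ s, f (g i) := by
    rw [← map_sum, ← map_sum, hgw]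
  have heq : ∀ i ∈ s, f (w i) = f (g i) := (Finset.sum_eq_sum_iff_of_le hle).1 hsum_eq
  exact fun i hi ↦ ⟨hw i hi, fun y hy ↦ ((hg hi).2 y hy).trans_eq (heq i hi).symm⟩

theorem subset_maximizers_of_sum_subset_sum_maximizers {f : F} {B : ι → Set E}
    (hne : ∀ i ∈ s, (B i).Nonempty) (hBP : ∀ i ∈ s, B i ⊆ P i)
    (hsum : ∑ i ∈ s, B i ⊆ ∑ i ∈ s, maximizers f (P i)) :
    ∀ i ∈ s, B i ⊆ maximizers f (P i) := by
  intro i hi x hx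
  obtain ⟨w, hw, rfl⟩ := Set.subset_eval_image_pi (pi_nonempty_iff_forall_mem.2 hne) i hx
  exact mem_maximizers_of_sum_mem_sum_maximizers (fun j hj ↦ hBP j hj (hw j hj))
    (hsum (Set.finsetSum_mem_finsetSum s B w hw)) i hi

theorem minkowski_face_decomposition_unique_general {f f' : F}
    (hne : ∀ i ∈ s, (maximizers f (P i)).Nonempty)
    (h : ∑ i ∈ s, maximizers f (P i) = ∑ i ∈ s, maximizers f' (P i)) :
    ∀ i ∈ s, maximizers f (P i) = maximizers f' (P i) := by
  have hne' : ∀ i ∈ s, (maximizers f' (P i)).Nonempty :=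
    set_sum_nonempty_iff.1 (h ▸ set_sum_nonempty_iff.2 hne)
  exact fun i hi ↦ Set.Subset.antisymm
    (subset_maximizers_of_sum_subset_sum_maximizers hne (fun _ _ ↦ maximizers_subset _ _)
      h.subset i hi)
    (subset_maximizers_of_sum_subset_sum_maximizers hne' (fun _ _ ↦ maximizers_subset _ _)
      h.superset i hi)

end Maximizers

/-- the decomposition of a face of a Minkowski sum as a sum
of maximizer sets is unique. -/
theorem minkowski_face_decomposition_unique (n m : ℕ) (P : Fin m → Set (Fin n → ℝ))
    (hne : ∀ i, (P i).Nonempty) (hcomp : ∀ i, IsCompact (P i))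
    (L L' : (Fin n → ℝ) →ₗ[ℝ] ℝ)
    (h : (∑ i, {x ∈ P i | ∀ y ∈ P i, L y ≤ L x})
        = ∑ i, {x ∈ P i | ∀ y ∈ P i, L' y ≤ L' x}) :
    ∀ i, {x ∈ P i | ∀ y ∈ P i, L y ≤ L x} = {x ∈ P i | ∀ y ∈ P i, L' y ≤ L' x} :=
  fun i ↦ minkowski_face_decomposition_unique_general (f := L) (f' := L')
    (fun j _ ↦ maximizers_nonempty_of_isCompact (hcomp j) (hne j)
      L.continuous_of_finiteDimensional.continuousOn.upperSemicontinuousOn) h i (Finset.mem_univ i)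
end

section
/- Let 2 ≤ k ≤ n. The set of extreme points of the general permutahedron Π_{n−1}(k−1) ⊆ ℝ^n is exactly {u ∈ ℝ^n : there is a permutation σ of {0,…,n−1} with u_j = C(σ(j), k−1) for all j}, where C(m, k−1) is the binomial coefficient (equal to 0 for m < k−1); in particular every vertex has exactly k−1 coordinates equal to 0 and one coordinate equal to each of C(k−1,k−1), C(k,k−1), …, C(n−1,k−1), and Π_{n−1}(k−1) has exactly n!/(k−1)! extreme points. -/
open Pointwise

/-!
A linear functional with coefficients `w` is maximal on `Δ_F` at the basis vector `e_a` with `a ∈ F`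
of largest weight, so on a Minkowski sum of simplices it is maximal at the sum of these `e_a`, a
point that depends only on an ordering `σ` of the coordinates compatible with `w`. By Hahn–Banach
the polytope is the convex hull of these points; when `w` is injective the maximizer is unique, so
each of them is exposed. If `F` runs over all `(r + 1)`-sets, then `j` is the top element of
`C(σ j, r)` of them: choose the other `r` elements among the `σ j` elements ranked below `j`. The
vertices thus form the orbit of `(C(0, r), …, C(n - 1, r))`, whose only repeated entry is `0`,
occurring `r` times; the orbit–stabilizer theorem gives `n! / r!`.
-/

open Finset Equiv
open scoped Nat

section SupportFunctionals

variable {E : Type*} [AddCommGroup E] [Module ℝ E] [TopologicalSpace E] [IsTopologicalAddGroup E]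
  [ContinuousSMul ℝ E] [LocallyConvexSpace ℝ E] {P V : Set E}

theorem subset_convexHull_of_forall_exists_isMaxOn (hV : IsClosed (convexHull ℝ V))
    (hmax : ∀ f : StrongDual ℝ E, ∃ v ∈ V, IsMaxOn f P v) : P ⊆ convexHull ℝ V := by
  intro x hxP
  by_contra hx
  obtain ⟨f, u, hfV, hfx⟩ := geometric_hahn_banach_closed_point (convex_convexHull ℝ V) hV hx
  obtain ⟨v, hvV, hv⟩ := hmax f
  exact ((hfV v (subset_convexHull ℝ V hvV)).trans hfx).not_ge (hv hxP)

theorem extremePoints_subset_of_forall_exists_isMaxOn (hP : Convex ℝ P) (hVP : V ⊆ P)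
    (hV : IsClosed (convexHull ℝ V)) (hmax : ∀ f : StrongDual ℝ E, ∃ v ∈ V, IsMaxOn f P v) :
    P.extremePoints ℝ ⊆ V := by
  have hPV : P = convexHull ℝ V :=
    (subset_convexHull_of_forall_exists_isMaxOn hV hmax).antisymm (convexHull_min hVP hP)
  rw [hPV]
  exact extremePoints_convexHull_subset

end SupportFunctionals

section MinkowskiSum

variable {ι E R G : Type*} [AddCommMonoid E] [AddCommMonoid R] [PartialOrder R]
  [FunLike G E R] [AddMonoidHomClass G E R] {f : G} {s : Finset ι} {A : ι → Set E} {v : ι → E}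

theorem isMaxOn_sum [IsOrderedAddMonoid R] (hmax : ∀ i ∈ s, IsMaxOn f (A i) (v i)) :
    IsMaxOn f (∑ i ∈ s, A i) (∑ i ∈ s, v i) := by
  intro x hx
  obtain ⟨y, hy, rfl⟩ := (Set.mem_finsetSum s A x).1 hx
  simp only [Set.mem_ofPred_eq, map_sum]
  exact sum_le_sum fun i hi => hmax i hi (hy hi)

theorem eq_sum_of_isMaxOn_of_le [IsOrderedCancelAddMonoid R]
    (hmax : ∀ i ∈ s, IsMaxOn f (A i) (v i))
    (huniq : ∀ i ∈ s, ∀ y ∈ A i, f (v i) ≤ f y → y = v i)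
    {x : E} (hx : x ∈ ∑ i ∈ s, A i) (hle : f (∑ i ∈ s, v i) ≤ f x) : x = ∑ i ∈ s, v i := by
  obtain ⟨y, hy, rfl⟩ := (Set.mem_finsetSum s A x).1 hx
  have hyv : ∀ i ∈ s, f (y i) ≤ f (v i) := fun i hi => hmax i hi (hy hi)
  have hsum : ∑ i ∈ s, f (y i) = ∑ i ∈ s, f (v i) :=
    (sum_le_sum hyv).antisymm (by simpa only [map_sum] using hle)
  have hval := (sum_eq_sum_iff_of_le hyv).1 hsum
  exact sum_congr rfl fun i hi => huniq i hi (y i) (hy hi) (hval i hi).ge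

end MinkowskiSum

section Simplex

variable {n : ℕ} {F : Finset (Fin n)} {a : Fin n} {y : Fin n → ℝ} {f : (Fin n → ℝ) →ₗ[ℝ] ℝ}

theorem convex_stdSimplexOn (n : ℕ) (F : Finset (Fin n)) : Convex ℝ (stdSimplexOn n F) := by
  have hinter : stdSimplexOn n F
      = stdSimplex ℝ (Fin n) ∩ Set.pi (F : Set (Fin n))ᶜ fun _ => {0} := by
    ext x
    simp only [stdSimplexOn, stdSimplex, Set.mem_ofPred_eq, Set.mem_inter_iff, Set.mem_pi,
      Set.mem_compl_iff, mem_coe, Set.mem_singleton_iff]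
    tauto
  rw [hinter]
  exact (convex_stdSimplex ℝ (Fin n)).inter (convex_pi fun _ _ => convex_singleton 0)

theorem single_mem_stdSimplexOn (ha : a ∈ F) : Pi.single a 1 ∈ stdSimplexOn n F := by
  refine ⟨fun i => ?_, fun i hi => ?_, by simp⟩
  · exact (Pi.single_nonneg (α := fun _ => ℝ)).2 zero_le_one i
  · exact Pi.single_eq_of_ne (ne_of_mem_of_not_mem ha hi).symm 1

theorem map_single_sub_map_eq_sum (f : (Fin n → ℝ) →ₗ[ℝ] ℝ) (a : Fin n)
    (hy : y ∈ stdSimplexOn n F) :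
    f (Pi.single a 1) - f y = ∑ i, y i * (f (Pi.single a 1) - f (Pi.single i 1)) := by
  have hfy : f y = ∑ i, y i * f (Pi.single i 1) := by
    conv_lhs => rw [pi_eq_sum_univ' y, map_sum]
    simp only [map_smul, smul_eq_mul]
  simp only [mul_sub, sum_sub_distrib, ← sum_mul, hy.2.2, one_mul, hfy]

theorem mul_map_single_sub_nonneg (hy : y ∈ stdSimplexOn n F)
    (hle : ∀ i ∈ F, f (Pi.single i 1) ≤ f (Pi.single a 1)) (i : Fin n) :
    0 ≤ y i * (f (Pi.single a 1) - f (Pi.single i 1)) := by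
  by_cases hi : i ∈ F
  · exact mul_nonneg (hy.1 i) (sub_nonneg.2 (hle i hi))
  · rw [hy.2.1 i hi, zero_mul]

theorem isMaxOn_stdSimplexOn (hle : ∀ i ∈ F, f (Pi.single i 1) ≤ f (Pi.single a 1)) :
    IsMaxOn f (stdSimplexOn n F) (Pi.single a 1) := by
  intro y hy
  rw [Set.mem_ofPred_eq, ← sub_nonneg, map_single_sub_map_eq_sum f a hy]
  exact sum_nonneg fun i _ => mul_map_single_sub_nonneg hy hle i

theorem eq_single_of_map_single_le (hlt : ∀ i ∈ F, i ≠ a → f (Pi.single i 1) < f (Pi.single a 1))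
    (hy : y ∈ stdSimplexOn n F) (hay : f (Pi.single a 1) ≤ f y) : y = Pi.single a 1 := by
  have hle : ∀ i ∈ F, f (Pi.single i 1) ≤ f (Pi.single a 1) := fun i hi => by
    rcases eq_or_ne i a with rfl | hia
    exacts [le_rfl, (hlt i hi hia).le]
  have hsum : ∑ i, y i * (f (Pi.single a 1) - f (Pi.single i 1)) = 0 := by
    rw [← map_single_sub_map_eq_sum f a hy, sub_eq_zero]
    exact hay.antisymm (isMaxOn_stdSimplexOn hle hy)
  have hzero : ∀ i, i ≠ a → y i = 0 := by
    intro i hia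
    by_cases hi : i ∈ F
    · have hterm := (sum_eq_zero_iff_of_nonneg
        fun i _ => mul_map_single_sub_nonneg hy hle i).1 hsum i (mem_univ i)
      exact (mul_eq_zero.1 hterm).resolve_right (sub_pos.2 (hlt i hi hia)).ne'
    · exact hy.2.1 i hi
  have hone : y a = 1 := by
    rw [← hy.2.2, sum_eq_single a (fun i _ => hzero i) (by simp)]
  funext i
  rcases eq_or_ne i a with rfl | hia
  · rw [hone, Pi.single_eq_same]
  · rw [hzero i hia, Pi.single_eq_of_ne hia]

end Simplex

section GreedyVertex

variable {n : ℕ} {F : Finset (Fin n)} {𝓕 : Finset (Finset (Fin n))} {σ : Perm (Fin n)}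

/-- The vertex of `Δ_F` at the element of `F` ranked highest by `σ`. It is encoded as the indicator
of the set of `σ`-maximal elements of `F`, so that it is `0` when `F` is empty. -/
def simplexTop (σ : Perm (Fin n)) (F : Finset (Fin n)) : Fin n → ℝ :=
  fun j => if j ∈ F ∧ ∀ i ∈ F, σ i ≤ σ j then 1 else 0

/-- The point of the Minkowski sum of the simplices `Δ_F`, `F ∈ 𝓕`, at which a linear functional
whose coefficients are ordered by `σ` is maximal. -/
def greedyVertex (𝓕 : Finset (Finset (Fin n))) (σ : Perm (Fin n)) : Fin n → ℝ :=
  ∑ F ∈ 𝓕, simplexTop σ F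

theorem exists_simplexTop_eq_single (σ : Perm (Fin n)) (hF : F.Nonempty) :
    ∃ a ∈ F, (∀ i ∈ F, σ i ≤ σ a) ∧ simplexTop σ F = Pi.single a 1 := by
  obtain ⟨a, ha, hmax⟩ := F.exists_max_image σ hF
  refine ⟨a, ha, hmax, funext fun j => ?_⟩
  have htop : (j ∈ F ∧ ∀ i ∈ F, σ i ≤ σ j) ↔ j = a :=
    ⟨fun hj => σ.injective ((hmax j hj.1).antisymm (hj.2 a ha)), fun hj => hj ▸ ⟨ha, hmax⟩⟩
  simp only [simplexTop, htop, Pi.single_apply]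

theorem isMaxOn_simplexTop {f : (Fin n → ℝ) →ₗ[ℝ] ℝ} (hF : F.Nonempty)
    (hf : Monovary (fun i => f (Pi.single i 1)) σ) :
    IsMaxOn f (stdSimplexOn n F) (simplexTop σ F) := by
  obtain ⟨a, -, hmax, htop⟩ := exists_simplexTop_eq_single σ hF
  rw [htop]
  refine isMaxOn_stdSimplexOn fun i hi => ?_
  rcases (hmax i hi).eq_or_lt with hia | hia
  exacts [(congrArg (fun j => f (Pi.single j 1)) (σ.injective hia)).le, hf hia]

theorem eq_simplexTop_of_map_le {f : (Fin n → ℝ) →ₗ[ℝ] ℝ} {y : Fin n → ℝ} (hF : F.Nonempty)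
    (hf : ∀ i j, σ i < σ j → f (Pi.single i 1) < f (Pi.single j 1)) (hy : y ∈ stdSimplexOn n F)
    (hle : f (simplexTop σ F) ≤ f y) : y = simplexTop σ F := by
  obtain ⟨a, -, hmax, htop⟩ := exists_simplexTop_eq_single σ hF
  rw [htop] at hle ⊢
  exact eq_single_of_map_single_le
    (fun i hi hia => hf i a ((hmax i hi).lt_of_ne (σ.injective.ne hia))) hy hle

theorem greedyVertex_mem (σ : Perm (Fin n)) (h𝓕 : ∀ F ∈ 𝓕, F.Nonempty) :
    greedyVertex 𝓕 σ ∈ ∑ F ∈ 𝓕, stdSimplexOn n F := by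
  refine Set.finsetSum_mem_finsetSum _ _ _ fun F hF => ?_
  obtain ⟨a, ha, -, htop⟩ := exists_simplexTop_eq_single σ (h𝓕 F hF)
  exact htop ▸ single_mem_stdSimplexOn ha

theorem exists_isMaxOn_greedyVertex (h𝓕 : ∀ F ∈ 𝓕, F.Nonempty) (f : (Fin n → ℝ) →ₗ[ℝ] ℝ) :
    ∃ σ, IsMaxOn f (∑ F ∈ 𝓕, stdSimplexOn n F) (greedyVertex 𝓕 σ) := by
  set w : Fin n → ℝ := fun i => f (Pi.single i 1)
  refine ⟨(Tuple.sort w).symm, isMaxOn_sum fun F hF => isMaxOn_simplexTop (h𝓕 F hF) ?_⟩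
  intro i j hij
  simpa using Tuple.monotone_sort w hij.le

theorem greedyVertex_mem_exposedPoints (σ : Perm (Fin n)) (h𝓕 : ∀ F ∈ 𝓕, F.Nonempty) :
    greedyVertex 𝓕 σ ∈ (∑ F ∈ 𝓕, stdSimplexOn n F).exposedPoints ℝ := by
  let f : StrongDual ℝ (Fin n → ℝ) := ∑ i, (σ i : ℝ) • ContinuousLinearMap.proj i
  have hf : ∀ i, f (Pi.single i 1) = (σ i : ℝ) := by
    intro i
    simp [f, Pi.single_apply]
  have hlt : ∀ i j, σ i < σ j → f (Pi.single i 1) < f (Pi.single j 1) := by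
    intro i j hij
    rw [hf, hf]
    exact_mod_cast hij
  have hmax : ∀ F ∈ 𝓕, IsMaxOn f (stdSimplexOn n F) (simplexTop σ F) := fun F hF =>
    isMaxOn_simplexTop (f := f.toLinearMap) (h𝓕 F hF) fun i j hij => (hlt i j hij).le
  have huniq : ∀ F ∈ 𝓕, ∀ y ∈ stdSimplexOn n F, f (simplexTop σ F) ≤ f y → y = simplexTop σ F :=
    fun F hF y hy => eq_simplexTop_of_map_le (f := f.toLinearMap) (h𝓕 F hF) hlt hy
  exact ⟨greedyVertex_mem σ h𝓕, f, fun y hy =>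
    ⟨isMaxOn_sum hmax hy, eq_sum_of_isMaxOn_of_le hmax huniq hy⟩⟩

theorem extremePoints_sum_stdSimplexOn (h𝓕 : ∀ F ∈ 𝓕, F.Nonempty) :
    (∑ F ∈ 𝓕, stdSimplexOn n F).extremePoints ℝ = Set.range (greedyVertex 𝓕) := by
  apply Set.Subset.antisymm
  · refine extremePoints_subset_of_forall_exists_isMaxOn
      (convex_sum _ fun F _ => convex_stdSimplexOn n F)
      (Set.range_subset_iff.2 fun σ => greedyVertex_mem σ h𝓕)
      ((Set.finite_range _).isClosed_convexHull ℝ) fun f => ?_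
    obtain ⟨σ, hσ⟩ := exists_isMaxOn_greedyVertex h𝓕 f.toLinearMap
    exact ⟨greedyVertex 𝓕 σ, ⟨σ, rfl⟩, hσ⟩
  · rintro _ ⟨σ, rfl⟩
    exact exposedPoints_subset_extremePoints (greedyVertex_mem_exposedPoints σ h𝓕)

theorem greedyVertex_apply (𝓕 : Finset (Finset (Fin n))) (σ : Perm (Fin n)) (j : Fin n) :
    greedyVertex 𝓕 σ j = #{F ∈ 𝓕 | j ∈ F ∧ ∀ i ∈ F, σ i ≤ σ j} := by
  simp only [greedyVertex, simplexTop, Finset.sum_apply, sum_boole]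

end GreedyVertex

section Counting

theorem card_filter_powersetCard_succ_isGreatest {α β : Type*} [Fintype α] [DecidableEq α]
    [LinearOrder β] {g : α → β} (hg : g.Injective) (r : ℕ) (j : α) :
    #{F ∈ univ.powersetCard (r + 1) | j ∈ F ∧ ∀ i ∈ F, g i ≤ g j}
      = (#{i | g i < g j}).choose r := by
  rw [← card_powersetCard]
  refine card_bij' (fun F _ => F.erase j) (fun G _ => insert j G) ?_ ?_ ?_ ?_
  · intro F hF
    obtain ⟨hcard, hj, hmax⟩ : #F = r + 1 ∧ j ∈ F ∧ ∀ i ∈ F, g i ≤ g j := by simpa using hF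
    refine mem_powersetCard.2
      ⟨fun i hi => ?_, by rw [card_erase_of_mem hj, hcard, r.add_sub_cancel]⟩
    obtain ⟨hij, hiF⟩ := mem_erase.1 hi
    exact mem_filter.2 ⟨mem_univ i, (hmax i hiF).lt_of_ne (hg.ne hij)⟩
  · intro G hG
    obtain ⟨hlt, hcard⟩ : (∀ i ∈ G, g i < g j) ∧ #G = r := by
      simpa [subset_iff] using hG
    have hjG : j ∉ G := fun hj => (hlt j hj).false
    simpa [card_insert_of_notMem hjG, hcard] using fun i hi => (hlt i hi).le
  · intro F hF
    exact insert_erase (mem_filter.1 hF).2.1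
  · intro G hG
    exact erase_insert fun hj => by simpa using (mem_powersetCard.1 hG).1 hj

theorem card_filter_comp_equiv {α β : Type*} [Fintype α] [Fintype β] (e : α ≃ β) (p : β → Prop)
    [DecidablePred p] : #{a | p (e a)} = #{b | p b} :=
  card_equiv e fun a => by simp only [mem_filter_univ]

theorem card_range_comp_perm_mul_prod_factorial {α ι : Type*} [Fintype α] [DecidableEq ι]
    (f : α → ι) :
    Nat.card (Set.range fun σ : Perm α => f ∘ σ) * ∏ i ∈ univ.image f, (#{a | f a = i})!
      = (Fintype.card α)! := by
  classical
  have horbit : (Set.range fun σ : Perm α => f ∘ σ) = MulAction.orbit (Perm α)ᵈᵐᵃ f :=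
    (DomMulAct.mk.surjective.range_comp fun σ : (Perm α)ᵈᵐᵃ => σ • f)
  have hstab : Nat.card (MulAction.stabilizer (Perm α)ᵈᵐᵃ f)
      = ∏ i ∈ univ.image f, (#{a | f a = i})! := by
    simp only [← Fintype.card_subtype]
    rw [← DomMulAct.stabilizer_card', ← Nat.card_eq_fintype_card]
    exact (Nat.card_congr (subtypeEquiv DomMulAct.mk fun _ => Iff.rfl)).symm
  rw [horbit, ← hstab, Nat.card_coe_set_eq, ← MulAction.index_stabilizer,
    Subgroup.index_mul_card, ← Nat.card_congr DomMulAct.mk, Nat.card_perm, Nat.card_eq_fintype_card]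

end Counting

section BinomialVector

variable {n r : ℕ}

theorem choose_lt_choose_of_lt {a b : ℕ} (hr : r ≠ 0) (hrb : r ≤ b) (hab : a < b) :
    a.choose r < b.choose r := by
  obtain ⟨s, rfl⟩ := Nat.exists_eq_succ_of_ne_zero hr
  obtain ⟨c, rfl⟩ := Nat.exists_eq_succ_of_ne_zero (Nat.ne_zero_of_lt hab)
  calc a.choose (s + 1) ≤ c.choose (s + 1) := Nat.choose_le_choose _ (Nat.lt_succ_iff.1 hab)
    _ < c.choose s + c.choose (s + 1) :=
      Nat.lt_add_of_pos_left (Nat.choose_pos (Nat.le_of_succ_le_succ hrb))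
    _ = (c + 1).choose (s + 1) := (Nat.choose_succ_succ' c s).symm

theorem choose_eq_choose_iff_of_le {a b : ℕ} (hr : r ≠ 0) (hrb : r ≤ b) :
    a.choose r = b.choose r ↔ a = b := by
  refine ⟨fun h => ?_, fun h => h ▸ rfl⟩
  rcases lt_trichotomy a b with hab | hab | hab
  · exact absurd h (choose_lt_choose_of_lt hr hrb hab).ne
  · exact hab
  · exact absurd h (choose_lt_choose_of_lt hr (hrb.trans hab.le) hab).ne'

/-- The vector `(C(0, r), C(1, r), …, C(n - 1, r))`, whose coordinate permutations are the vertices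
of the general permutahedron `genPerm n (r + 1)`. -/
def chooseVec (n r : ℕ) : Fin n → ℝ :=
  fun i => ((i : ℕ).choose r : ℕ)

theorem card_chooseVec_eq_zero (hrn : r ≤ n) : #{i | chooseVec n r i = 0} = r := by
  simp only [chooseVec, Nat.cast_eq_zero, Nat.choose_eq_zero_iff, Fin.card_filter_val_lt,
    min_eq_right hrn]

theorem chooseVec_eq_choose_iff {m : ℕ} (hr : r ≠ 0) (hrm : r ≤ m) (i : Fin n) :
    chooseVec n r i = (m.choose r : ℕ) ↔ (i : ℕ) = m := by
  rw [chooseVec, Nat.cast_inj, choose_eq_choose_iff_of_le hr hrm]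

theorem card_chooseVec_eq_le_one (hr : r ≠ 0) {c : ℝ} (hc : c ≠ 0) :
    #{i | chooseVec n r i = c} ≤ 1 := by
  refine card_le_one.2 fun i hi j hj => Fin.ext ?_
  obtain ⟨-, hi⟩ := mem_filter.1 hi
  obtain ⟨-, rfl⟩ := mem_filter.1 hj
  have hrj : r ≤ j := by simpa [chooseVec, Nat.choose_eq_zero_iff] using hc
  exact (chooseVec_eq_choose_iff hr hrj i).1 hi

theorem prod_factorial_card_chooseVec_eq (hr : r ≠ 0) (hrn : r ≤ n) :
    ∏ c ∈ univ.image (chooseVec n r), (#{i | chooseVec n r i = c})! = r ! := by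
  rw [prod_eq_single 0, card_chooseVec_eq_zero hrn]
  · exact fun c _ hc => Nat.factorial_eq_one.2 (card_chooseVec_eq_le_one hr hc)
  · intro h0
    rw [filter_false_of_mem fun i _ hi => h0 (mem_image.2 ⟨i, mem_univ i, hi⟩), card_empty,
      Nat.factorial_zero]

theorem card_range_chooseVec_comp_perm (hr : r ≠ 0) (hrn : r ≤ n) :
    Nat.card (Set.range fun σ : Perm (Fin n) => chooseVec n r ∘ σ) = n ! / r ! := by
  have hcount := card_range_comp_perm_mul_prod_factorial (chooseVec n r)
  rw [prod_factorial_card_chooseVec_eq hr hrn, Fintype.card_fin] at hcount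
  rw [← hcount, Nat.mul_div_cancel _ r.factorial_pos]

theorem existsUnique_chooseVec_perm_eq (hr : r ≠ 0) {m : ℕ} (hrm : r ≤ m) (hmn : m < n)
    (σ : Perm (Fin n)) : ∃! j, chooseVec n r (σ j) = (m.choose r : ℕ) := by
  simp only [chooseVec_eq_choose_iff hr hrm]
  exact σ.existsUnique_congr_left.2 ⟨⟨m, hmn⟩, by simp, by simp [Fin.ext_iff]⟩

theorem greedyVertex_powersetCard_succ (r : ℕ) (σ : Perm (Fin n)) :
    greedyVertex (univ.powersetCard (r + 1)) σ = chooseVec n r ∘ σ := by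
  funext j
  have hrank : #{i | σ i < σ j} = (σ j : ℕ) := by
    rw [card_filter_comp_equiv σ (· < σ j), filter_gt_eq_Iio, Fin.card_Iio]
  have hcount := card_filter_powersetCard_succ_isGreatest σ.injective r j
  rw [hrank] at hcount
  rw [greedyVertex_apply]
  exact congrArg Nat.cast (by convert hcount)

theorem extremePoints_genPerm_succ (n r : ℕ) :
    (genPerm n (r + 1)).extremePoints ℝ
      = Set.range fun σ : Perm (Fin n) => chooseVec n r ∘ σ := by
  have hne : ∀ F ∈ (univ : Finset (Fin n)).powersetCard (r + 1), F.Nonempty := fun F hF =>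
    card_pos.1 ((mem_powersetCard.1 hF).2 ▸ r.succ_pos)
  rw [genPerm, extremePoints_sum_stdSimplexOn hne]
  exact congrArg Set.range (funext (greedyVertex_powersetCard_succ r))

end BinomialVector

/-- the extreme points (vertices) of the general permutahedron
Π_{n−1}(k−1) are exactly the coordinate permutations of
(C(0,k−1), C(1,k−1), …, C(n−1,k−1)); each has exactly k−1 zero coordinates and
one coordinate equal to each of C(k−1,k−1), …, C(n−1,k−1), and there are
exactly n!/(k−1)! of them. -/
theorem extremePoints_genPerm (n k : ℕ) (hk : 2 ≤ k) (hkn : k ≤ n) :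
    (Set.extremePoints ℝ (genPerm n k)
      = {u : Fin n → ℝ | ∃ σ : Equiv.Perm (Fin n),
          ∀ j, u j = (((σ j : ℕ).choose (k - 1) : ℕ) : ℝ)}) ∧
    (∀ u ∈ Set.extremePoints ℝ (genPerm n k),
      (Finset.univ.filter (fun j => u j = 0)).card = k - 1 ∧
      ∀ m : ℕ, k - 1 ≤ m → m ≤ n - 1 → ∃! j : Fin n, u j = ((m.choose (k - 1) : ℕ) : ℝ)) ∧
    Nat.card (Set.extremePoints ℝ (genPerm n k)) = Nat.factorial n / Nat.factorial (k - 1) := by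
  obtain ⟨r, rfl⟩ := Nat.exists_eq_succ_of_ne_zero (Nat.ne_zero_of_lt hk)
  have hr : r ≠ 0 := by omega
  have hrn : r ≤ n := by omega
  simp only [Nat.succ_eq_add_one, Nat.add_sub_cancel, extremePoints_genPerm_succ]
  refine ⟨?_, ?_, card_range_chooseVec_comp_perm hr hrn⟩
  · ext u
    simp only [Set.mem_range, Set.mem_ofPred_eq, eq_comm (b := u), funext_iff]
    rfl
  · rintro _ ⟨σ, rfl⟩
    refine ⟨?_, fun m hrm hmn => existsUnique_chooseVec_perm_eq hr hrm (by omega) σ⟩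
    exact (card_filter_comp_equiv σ (chooseVec n r · = 0)).trans (card_chooseVec_eq_zero hrn)
end

section
/- (Rado) Let v ∈ ℝ^n with v_0 ≥ v_1 ≥ ⋯ ≥ v_{n−1}. Then P_{n−1}(v) = {t ∈ ℝ^n : ∑_{i=0}^{n−1} t_i = ∑_{i=0}^{n−1} v_i, and for every subset I ⊆ {0,…,n−1}, ∑_{i∈I} t_i ≤ ∑_{i=0}^{|I|−1} v_i}. -/
open Pointwise

/-!
By Hahn–Banach, a point lies in the convex hull of a finite set `s` as soon as every linear
functional is at least as large somewhere on `s` as at the point. For `s` the orbit of `v` and a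
functional with coefficients `c`, rearrange the coordinates so that `c` decreases: the inequalities
for the initial segments `I` then bound the partial sums of `t` by those of `v`, and summation by
parts turns this into `∑ tᵢ cᵢ ≤ ∑ vᵢ cᵢ`, the right-hand side being the value at a point of the
orbit. Conversely, the inequalities hold on the orbit because a decreasing `v` has its largest
entries first, and they define a convex set.
-/

theorem mem_convexHull_of_forall_exists_le {E : Type*} [AddCommGroup E] [Module ℝ E]
    [TopologicalSpace E] [IsTopologicalAddGroup E] [ContinuousSMul ℝ E] [LocallyConvexSpace ℝ E]
    [T2Space E] {s : Set E} (hs : s.Finite) {x : E}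
    (h : ∀ f : E →L[ℝ] ℝ, ∃ y ∈ s, f x ≤ f y) : x ∈ convexHull ℝ s := by
  by_contra hx
  obtain ⟨f, u, hfu, hux⟩ :=
    geometric_hahn_banach_closed_point (convex_convexHull ℝ s) (hs.isClosed_convexHull ℝ) hx
  obtain ⟨y, hy, hxy⟩ := h f
  exact (hux.trans_le hxy).not_gt (hfu y (subset_convexHull ℝ s hy))

theorem convex_setOf_sum_eq_and_forall_sum_le {ι R : Type*} [Fintype ι] [Semiring R]
    [PartialOrder R] [IsOrderedRing R] (a : R) (f : Finset ι → R) :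
    Convex R {t : ι → R | ∑ i, t i = a ∧ ∀ I : Finset ι, ∑ i ∈ I, t i ≤ f I} := by
  have isLinearMap_sum (I : Finset ι) : IsLinearMap R fun t : ι → R ↦ ∑ i ∈ I, t i :=
    ⟨fun x y ↦ Finset.sum_add_distrib, fun b x ↦ (Finset.mul_sum I x b).symm⟩
  simp only [Set.ofPred_and, Set.ofPred_forall]
  exact (convex_hyperplane (isLinearMap_sum Finset.univ) a).inter
    (convex_iInter fun I ↦ convex_halfSpace_le (isLinearMap_sum I) (f I))

theorem sum_le_sum_of_card_eq_of_isLowerSet {ι M : Type*} [LinearOrder ι] [AddCommMonoid M]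
    [PartialOrder M] [IsOrderedCancelAddMonoid M] {v : ι → M} (hv : Antitone v) {A J : Finset ι}
    (hA : IsLowerSet (A : Set ι)) (hcard : J.card = A.card) : ∑ i ∈ J, v i ≤ ∑ i ∈ A, v i := by
  rw [← Finset.sum_sdiff_le_sum_sdiff]
  let e : ↥(J \ A) ≃ ↥(A \ J) := Finset.equivOfCardEq (Finset.card_sdiff_comm hcard)
  have le_of_mem_sdiff (i : ↥(J \ A)) : v i ≤ v (e i) := by
    have hi := (Finset.mem_sdiff.mp i.2).2
    have hei := (Finset.mem_sdiff.mp (e i).2).1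
    exact hv (le_of_not_ge fun hie ↦ hi (hA hie hei))
  calc ∑ i ∈ J \ A, v i = ∑ i : ↥(J \ A), v i := (Finset.sum_coe_sort _ _).symm
    _ ≤ ∑ i : ↥(J \ A), v (e i) := Finset.sum_le_sum fun i _ ↦ le_of_mem_sdiff i
    _ = ∑ i : ↥(A \ J), v i := Equiv.sum_comp e fun i ↦ v i
    _ = ∑ i ∈ A \ J, v i := Finset.sum_coe_sort _ _

theorem sum_comp_perm_le_sum_val_lt_card {n : ℕ} {M : Type*} [AddCommMonoid M] [PartialOrder M]
    [IsOrderedCancelAddMonoid M] {v : Fin n → M} (hv : Antitone v) (σ : Equiv.Perm (Fin n))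
    (I : Finset (Fin n)) :
    ∑ i ∈ I, v (σ i) ≤ ∑ i ∈ Finset.univ.filter (fun i : Fin n ↦ (i : ℕ) < I.card), v i := by
  refine (Finset.sum_map I σ.toEmbedding v).symm.trans_le
    (sum_le_sum_of_card_eq_of_isLowerSet hv ?_ ?_)
  · intro i j hji hi
    simp only [Finset.coe_filter_univ, Set.mem_ofPred_eq] at hi ⊢
    exact lt_of_le_of_lt hji hi
  · rw [Finset.card_map, Fin.card_filter_val_lt, min_eq_right (card_finset_fin_le I)]

theorem sum_mul_le_sum_mul_of_antitoneOn {ι R : Type*} [LinearOrder ι] [Semiring R]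
    [PartialOrder R] [IsOrderedRing R] {s : Finset ι} {c d : ι → R} {b : R}
    (hc : AntitoneOn c s) (hb : ∀ i ∈ s, b ≤ c i)
    (hd : ∀ j ∈ s, 0 ≤ ∑ i ∈ s with i ≤ j, d i) :
    (∑ i ∈ s, d i) * b ≤ ∑ i ∈ s, d i * c i := by
  -- Peel off the largest index `a`; on the remaining ones `c a` is a lower bound for `c`.
  induction s using Finset.induction_on_max generalizing b with
  | empty => simp
  | insert a s ha ih =>
    have ha_notMem : a ∉ s := fun h ↦ (ha a h).false
    have total_nonneg : 0 ≤ ∑ i ∈ insert a s, d i := by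
      have le_a : ∀ i ∈ insert a s, i ≤ a :=
        (Finset.forall_mem_insert ..).mpr ⟨le_rfl, fun i hi ↦ (ha i hi).le⟩
      simpa only [Finset.filter_true_of_mem le_a] using hd a (Finset.mem_insert_self a s)
    have bound_on_s : (∑ i ∈ s, d i) * c a ≤ ∑ i ∈ s, d i * c i := by
      refine ih (hc.mono (by simp)) (fun i hi ↦ hc (by simp [hi]) (by simp) (ha i hi).le) ?_
      intro j hj
      simpa only [Finset.filter_insert, if_neg (ha j hj).not_ge]
        using hd j (Finset.mem_insert_of_mem hj)
    calc (∑ i ∈ insert a s, d i) * b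
        ≤ (∑ i ∈ insert a s, d i) * c a :=
          mul_le_mul_of_nonneg_left (hb a (Finset.mem_insert_self a s)) total_nonneg
      _ = d a * c a + (∑ i ∈ s, d i) * c a := by rw [Finset.sum_insert ha_notMem, add_mul]
      _ ≤ d a * c a + ∑ i ∈ s, d i * c i := by gcongr
      _ = ∑ i ∈ insert a s, d i * c i := by rw [Finset.sum_insert ha_notMem]

theorem sum_mul_le_sum_mul_of_sum_Iic_le {ι R : Type*} [LinearOrder ι] [Fintype ι]
    [LocallyFiniteOrderBot ι] [Ring R] [LinearOrder R] [IsOrderedRing R] {c t v : ι → R}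
    (hc : Antitone c) (hsum : ∑ i, t i = ∑ i, v i)
    (hle : ∀ j, ∑ i ∈ Finset.Iic j, t i ≤ ∑ i ∈ Finset.Iic j, v i) :
    ∑ i, t i * c i ≤ ∑ i, v i * c i := by
  obtain ⟨b, hb⟩ := (Set.finite_range c).bddBelow
  have partial_summation : (∑ i, (v i - t i)) * b ≤ ∑ i, (v i - t i) * c i := by
    refine sum_mul_le_sum_mul_of_antitoneOn (hc.antitoneOn _)
      (fun i _ ↦ hb (Set.mem_range_self i)) fun j _ ↦ ?_
    simpa [Finset.filter_ge_eq_Iic] using hle j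
  simpa [sub_mul, hsum] using partial_summation

theorem exists_perm_sum_mul_le_sum_comp_mul {n : ℕ} {R : Type*} [Ring R] [LinearOrder R]
    [IsOrderedRing R] {t v : Fin n → R} (hsum : ∑ i, t i = ∑ i, v i)
    (hle : ∀ I : Finset (Fin n), ∑ i ∈ I, t i
      ≤ ∑ i ∈ Finset.univ.filter (fun i : Fin n ↦ (i : ℕ) < I.card), v i)
    (c : Fin n → R) : ∃ σ : Equiv.Perm (Fin n), ∑ i, t i * c i ≤ ∑ i, v (σ i) * c i := by
  let τ : Equiv.Perm (Fin n) := Tuple.sort (OrderDual.toDual ∘ c)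
  have antitone_c_comp_τ : Antitone (c ∘ τ) := Tuple.monotone_sort (OrderDual.toDual ∘ c)
  have sum_Iic_le (j : Fin n) : ∑ i ∈ Finset.Iic j, t (τ i) ≤ ∑ i ∈ Finset.Iic j, v i := by
    have filter_eq_Iic : Finset.univ.filter (fun i : Fin n ↦ (i : ℕ) < j + 1) = Finset.Iic j := by
      simp only [Nat.lt_succ_iff, Fin.val_fin_le, Finset.filter_ge_eq_Iic]
    simpa only [Finset.sum_map, Equiv.coe_toEmbedding, Finset.card_map, Fin.card_Iic, filter_eq_Iic]
      using hle ((Finset.Iic j).map τ.toEmbedding)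
  refine ⟨τ.symm, ?_⟩
  calc ∑ i, t i * c i = ∑ i, t (τ i) * c (τ i) := (Equiv.sum_comp τ fun i ↦ t i * c i).symm
    _ ≤ ∑ i, v i * c (τ i) := sum_mul_le_sum_mul_of_sum_Iic_le antitone_c_comp_τ
        ((Equiv.sum_comp τ t).trans hsum) sum_Iic_le
    _ = ∑ i, v (τ.symm i) * c i := by
        rw [← Equiv.sum_comp τ fun i ↦ v (τ.symm i) * c i]
        simp only [Equiv.symm_apply_apply]

/-- Rado: for v with v_0 ≥ v_1 ≥ ⋯ ≥ v_{n−1}, the permutahedron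
P_{n−1}(v) is cut out by the equality ∑ t_i = ∑ v_i together with the
inequalities ∑_{i∈I} t_i ≤ v_0 + ⋯ + v_{|I|−1} for all I ⊆ {0,…,n−1}. -/
theorem rado_theorem (n : ℕ) (v : Fin n → ℝ) (hv : ∀ i j : Fin n, i ≤ j → v j ≤ v i) :
    permPoly v = {t : Fin n → ℝ |
      ∑ i, t i = ∑ i, v i ∧
      ∀ I : Finset (Fin n), ∑ i ∈ I, t i
        ≤ ∑ i ∈ Finset.univ.filter (fun i : Fin n => (i : ℕ) < I.card), v i} := by
  refine Set.Subset.antisymm (convexHull_min ?_ (convex_setOf_sum_eq_and_forall_sum_le _ _)) ?_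
  · rintro _ ⟨σ, rfl⟩
    exact ⟨Equiv.sum_comp σ v, sum_comp_perm_le_sum_val_lt_card (fun i j ↦ hv i j) σ⟩
  · rintro t ⟨hsum, hle⟩
    have orbit_finite : {w | ∃ σ : Equiv.Perm (Fin n), w = v ∘ σ}.Finite := by
      simpa only [Set.range, eq_comm] using Set.finite_range fun σ : Equiv.Perm (Fin n) ↦ v ∘ σ
    refine mem_convexHull_of_forall_exists_le orbit_finite fun f ↦ ?_
    let c (i : Fin n) : ℝ := f fun j ↦ if i = j then 1 else 0
    have f_apply (x : Fin n → ℝ) : f x = ∑ i, x i * c i := f.toLinearMap.pi_apply_eq_sum_univ x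
    obtain ⟨σ, hσ⟩ := exists_perm_sum_mul_le_sum_comp_mul hsum hle c
    exact ⟨v ∘ σ, ⟨σ, rfl⟩, (f_apply t).trans_le (hσ.trans_eq (f_apply (v ∘ σ)).symm)⟩
end

section
/- For n ≥ 1 and 1 ≤ k ≤ n let v_{n−1}(k−1) ∈ ℝ^n be the vector whose j-th coordinate (0 ≤ j ≤ n−1) is the binomial coefficient C(j, k−1) (equal to 0 for j < k−1). Then for u ∈ ℝ^n, there exist nonnegative real numbers y_1, …, y_n with u = ∑_{k=1}^{n} y_k·v_{n−1}(k−1) if and only if all backward differences of u are nonnegative, i.e. Δ^i(u)_k ≥ 0 for all 0 ≤ i ≤ k ≤ n−1. -/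
open Pointwise

/-!
Extend `u` to a function `f` on `ℕ`, so that its backward differences become the forward
differences `Δ^i f (k - i)`. Newton's formula `f j = ∑ k, C(j, k) Δ^k f 0`, together with the
triangularity of `C(j, k)`, shows that the only possible coefficients are `y k = Δ^k f 0`, and
these are themselves backward differences of `u`. Conversely, Newton's formula applied to `Δ^i f`
writes every `Δ^i f m` as a nonnegative integer combination of the `Δ^k f 0`.
-/

section NewtonExpansion

open Finset
open scoped fwdDiff

variable {G : Type*} {n : ℕ}

lemma eq_zero_of_sum_choose_smul_eq_zero [AddCommMonoid G] {z : Fin n → G}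
    (hz : ∀ j : Fin n, ∑ k : Fin n, (j : ℕ).choose k • z k = 0) (j : Fin n) : z j = 0 := by
  induction j using WellFoundedLT.induction with
  | ind j ih =>
    have hoff : ∀ k : Fin n, k ≠ j → (j : ℕ).choose k • z k = 0 := fun k hk ↦ by
      rcases hk.lt_or_gt with hkj | hjk
      · rw [ih k hkj, smul_zero]
      · rw [Nat.choose_eq_zero_of_lt hjk, zero_smul]
    simpa [Fintype.sum_eq_single j hoff] using hz j

section AddCommGroup

variable [AddCommGroup G]

/-- The `i`-th backward difference at position `k` of a finite sequence in an abelian group,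
the counterpart of `bdiff` for arbitrary values. As there, the truncated index `k - j` is the
intended one only when `i ≤ k`. -/
def backwardDiff (u : Fin n → G) (i : ℕ) (k : Fin n) : G :=
  ∑ j ∈ range (i + 1), ((-1 : ℤ) ^ j * i.choose j) •
    u ⟨(k : ℕ) - j, (Nat.sub_le _ _).trans_lt k.isLt⟩

lemma bdiff_eq_backwardDiff (u : Fin n → ℝ) (i : ℕ) (k : Fin n) :
    bdiff u i k = backwardDiff u i k := by
  simp [bdiff, backwardDiff]

lemma backwardDiff_eq_fwdDiff_iter (f : ℕ → G) {i : ℕ} {k : Fin n} (hik : i ≤ k) :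
    backwardDiff (fun j : Fin n ↦ f j) i k = (Δ_[1])^[i] f (k - i) := by
  rw [fwdDiff_iter_eq_sum_shift, ← sum_range_reflect, backwardDiff]
  refine sum_congr rfl fun j hj ↦ ?_
  have hji : j ≤ i := mem_range_succ_iff.mp hj
  have hshift : (k : ℕ) - i + (i - j) • 1 = k - j := by rw [smul_eq_mul]; omega
  rw [Nat.add_sub_cancel, hshift, Nat.sub_sub_self hji, Nat.choose_symm hji]

lemma fwdDiff_iter_eq_sum_choose_smul (f : ℕ → G) (i m : ℕ) :
    (Δ_[1])^[i] f m = ∑ k ∈ range (m + 1), m.choose k • (Δ_[1])^[k + i] f 0 := by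
  simpa [Function.iterate_add_apply] using shift_eq_sum_fwdDiff_iter 1 ((Δ_[1])^[i] f) m 0

lemma eq_sum_fin_choose_smul_fwdDiff_iter (f : ℕ → G) (j : Fin n) :
    f j = ∑ k : Fin n, (j : ℕ).choose k • (Δ_[1])^[k] f 0 := by
  rw [Fin.sum_univ_eq_sum_range (fun k ↦ (j : ℕ).choose k • (Δ_[1])^[k] f 0) n]
  refine (fwdDiff_iter_eq_sum_choose_smul f 0 j).trans <|
    sum_subset (range_subset_range.mpr j.isLt) fun k _ hk ↦ ?_
  rw [Nat.choose_eq_zero_of_lt (by simpa using hk), zero_smul]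

lemma eq_sum_choose_smul_iff_eq_fwdDiff_iter (f : ℕ → G) (y : Fin n → G) :
    (∀ j : Fin n, f j = ∑ k : Fin n, (j : ℕ).choose k • y k) ↔
      ∀ k : Fin n, y k = (Δ_[1])^[k] f 0 := by
  refine ⟨fun hy k ↦ sub_eq_zero.mp ?_, fun hy j ↦ ?_⟩
  · refine eq_zero_of_sum_choose_smul_eq_zero (z := fun k ↦ y k - (Δ_[1])^[k] f 0) (fun j ↦ ?_) k
    simp_rw [smul_sub, sum_sub_distrib, ← hy j, ← eq_sum_fin_choose_smul_fwdDiff_iter f j,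
      sub_self]
  · simp_rw [hy, ← eq_sum_fin_choose_smul_fwdDiff_iter f j]

end AddCommGroup

variable [AddCommGroup G] [PartialOrder G] [IsOrderedAddMonoid G]

lemma forall_fwdDiff_iter_nonneg_iff_at_zero (f : ℕ → G) :
    (∀ (i : ℕ) (k : Fin n), i ≤ k → 0 ≤ (Δ_[1])^[i] f (k - i)) ↔
      ∀ k : Fin n, 0 ≤ (Δ_[1])^[k] f 0 := by
  refine ⟨fun h k ↦ by simpa using h k k le_rfl, fun h i k hik ↦ ?_⟩
  rw [fwdDiff_iter_eq_sum_choose_smul]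
  refine sum_nonneg fun l hl ↦ nsmul_nonneg (h ⟨l + i, ?_⟩) _
  have hlk : l ≤ k - i := mem_range_succ_iff.mp hl
  omega

theorem nonneg_span_binomial_vectors_iff_general (u : Fin n → G) :
    (∃ y : Fin n → G, (∀ k, 0 ≤ y k) ∧ ∀ j, u j = ∑ k : Fin n, (j : ℕ).choose k • y k) ↔
      ∀ (i : ℕ) (k : Fin n), i ≤ k → 0 ≤ backwardDiff u i k := by
  obtain ⟨f, rfl⟩ : ∃ f : ℕ → G, u = fun j : Fin n ↦ f j :=
    ⟨Function.extend Fin.val u 0, (Function.extend_comp Fin.val_injective u 0).symm⟩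
  calc (∃ y : Fin n → G, (∀ k, 0 ≤ y k) ∧ ∀ j : Fin n, f j = ∑ k : Fin n, (j : ℕ).choose k • y k)
      ↔ ∃ y : Fin n → G, (∀ k, 0 ≤ y k) ∧ y = fun k : Fin n ↦ (Δ_[1])^[k] f 0 := by
        simp_rw [eq_sum_choose_smul_iff_eq_fwdDiff_iter, funext_iff]
    _ ↔ ∀ k : Fin n, 0 ≤ (Δ_[1])^[k] f 0 := exists_eq_right
    _ ↔ ∀ (i : ℕ) (k : Fin n), i ≤ k → 0 ≤ (Δ_[1])^[i] f (k - i) :=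
        (forall_fwdDiff_iter_nonneg_iff_at_zero f).symm
    _ ↔ ∀ (i : ℕ) (k : Fin n), i ≤ k → 0 ≤ backwardDiff (fun j : Fin n ↦ f j) i k :=
        forall₃_congr fun _ _ hik ↦ by rw [backwardDiff_eq_fwdDiff_iter f hik]

end NewtonExpansion

/-- u ∈ ℝ^n is a nonnegative combination of the vectors
v_{n−1}(k−1) = (C(0,k−1),…,C(n−1,k−1)), k = 1,…,n, iff all backward
differences of u are nonnegative. -/
theorem nonneg_span_binomial_vectors_iff (n : ℕ) (hn : 1 ≤ n) (u : Fin n → ℝ) :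
    (∃ y : Fin n → ℝ, (∀ k, 0 ≤ y k) ∧
        u = ∑ k : Fin n, y k • (fun j : Fin n => (((j : ℕ).choose (k : ℕ) : ℕ) : ℝ)))
      ↔ ∀ (i : ℕ) (k : Fin n), i ≤ (k : ℕ) → 0 ≤ bdiff u i k := by
  simpa [bdiff_eq_backwardDiff, funext_iff, mul_comm] using
    nonneg_span_binomial_vectors_iff_general u
end

section
/- Let n ≥ 1 and v ∈ ℝ^n. The dimension of P_{n−1}(v) (the dimension of its affine span) equals 0 if all coordinates of v are equal, and equals n−1 otherwise. In particular, for 2 ≤ k ≤ n the general permutahedron Π_{n−1}(k−1) has dimension n−1. -/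
open Pointwise

/-!
Coordinate sums are constant on `P_{n−1}(v)` and on `Π_{n−1}(k−1)`, so both lie in a translate of
the hyperplane of vectors with coordinate sum zero, which is spanned by the differences
`e_i - e_j`. Conversely all these differences are directions of the two polytopes. If
`v a ≠ v b`, move `a` to position `i` and `b` to position `j`; swapping these two coordinates then
changes the vertex by a nonzero multiple of `e_i - e_j`. For `Π_{n−1}(k−1)`, the direction space of
a Minkowski sum is the sum of the direction spaces, and `Δ_F` contributes `e_i - e_j` whenever
`i, j ∈ F`; such an `F` with `k` elements exists because `2 ≤ k ≤ n`.
-/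

section SumZero

variable (R ι : Type*) [Ring R] [Fintype ι]

/-- The vectors of `R^ι` whose coordinates sum to zero, as the kernel of the sum functional: the
common direction of the hyperplanes `{x | ∑ i, x i = c}`. -/
def sumZeroSubmodule : Submodule R (ι → R) :=
  LinearMap.ker (Fintype.linearCombination R (1 : ι → R))

variable {R ι}

lemma mem_sumZeroSubmodule {x : ι → R} : x ∈ sumZeroSubmodule R ι ↔ ∑ i, x i = 0 := by
  simp [sumZeroSubmodule, Fintype.linearCombination_apply]

lemma sumZeroSubmodule_le [DecidableEq ι] {D : Submodule R (ι → R)}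
    (hD : ∀ i j, i ≠ j → Pi.single i 1 - Pi.single j 1 ∈ D) : sumZeroSubmodule R ι ≤ D := by
  intro x hx
  rw [mem_sumZeroSubmodule] at hx
  rcases isEmpty_or_nonempty ι with _ | ⟨⟨z⟩⟩
  · simp [Subsingleton.elim x 0]
  have hx_eq : x = ∑ i, x i • (Pi.single i 1 - Pi.single z 1 : ι → R) := by
    simp only [smul_sub, Finset.sum_sub_distrib, ← Finset.sum_smul, hx, zero_smul, sub_zero]
    exact pi_eq_sum_univ' x
  rw [hx_eq]
  refine D.sum_mem fun i _ ↦ D.smul_mem _ ?_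
  rcases eq_or_ne i z with rfl | hiz
  · simp
  · exact hD i z hiz

lemma finrank_sumZeroSubmodule_add_one (K ι : Type*) [DivisionRing K] [Fintype ι] [Nonempty ι] :
    Module.finrank K (sumZeroSubmodule K ι) + 1 = Fintype.card ι := by
  classical
  have hsum : Fintype.linearCombination K (1 : ι → K) ≠ 0 := fun h ↦ by
    simpa using LinearMap.congr_fun h (Pi.single (Classical.arbitrary ι) 1)
  rw [← Module.finrank_fintype_fun_eq_card K]
  exact Module.Dual.finrank_ker_add_one_of_ne_zero hsum

lemma vectorSpan_le_sumZeroSubmodule {S : Set (ι → R)} {c : R} (hS : ∀ x ∈ S, ∑ i, x i = c) :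
    vectorSpan R S ≤ sumZeroSubmodule R ι := by
  rw [vectorSpan_def, Submodule.span_le]
  rintro _ ⟨x, hx, y, hy, rfl⟩
  simp [mem_sumZeroSubmodule, hS x hx, hS y hy]

end SumZero

lemma setDim_eq_sub_one {n : ℕ} (hn : 1 ≤ n) {S : Set (Fin n → ℝ)}
    (hS : vectorSpan ℝ S = sumZeroSubmodule ℝ (Fin n)) : setDim S = n - 1 := by
  have : Nonempty (Fin n) := ⟨⟨0, hn⟩⟩
  have h := finrank_sumZeroSubmodule_add_one ℝ (Fin n)
  rw [Fintype.card_fin] at h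
  rw [setDim, direction_affineSpan, hS]
  omega

section PermutationOrbit

variable {ι : Type*}

lemma sub_comp_swap {R : Type*} [Ring R] [DecidableEq ι] (v : ι → R) (i j : ι) :
    v - v ∘ Equiv.swap i j = (v i - v j) • (Pi.single i 1 - Pi.single j 1) := by
  ext l
  rw [Equiv.comp_swap_eq_update]
  rcases eq_or_ne l i with rfl | hi <;> rcases eq_or_ne l j with rfl | hj <;> simp [*]

lemma vectorSpan_permOrbit_eq_bot {R : Type*} [Ring R] {v : ι → R} (hv : ∀ i j, v i = v j) :
    vectorSpan R {w | ∃ σ : Equiv.Perm ι, w = v ∘ σ} = ⊥ := by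
  refine vectorSpan_of_subsingleton R ?_
  rintro _ ⟨σ, rfl⟩ _ ⟨τ, rfl⟩
  exact funext fun i ↦ hv _ _

lemma vectorSpan_permOrbit_eq_sumZeroSubmodule {K : Type*} [DivisionRing K] [Fintype ι]
    {v : ι → K} {a b : ι} (hab : v a ≠ v b) :
    vectorSpan K {w | ∃ σ : Equiv.Perm ι, w = v ∘ σ} = sumZeroSubmodule K ι := by
  classical
  refine le_antisymm (vectorSpan_le_sumZeroSubmodule (c := ∑ i, v i) ?_)
    (sumZeroSubmodule_le fun i j hij ↦ ?_)
  · rintro _ ⟨σ, rfl⟩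
    exact Equiv.sum_comp σ v
  · obtain ⟨σ, rfl, rfl⟩ : ∃ σ : Equiv.Perm ι, σ i = a ∧ σ j = b :=
      MulAction.is_two_pretransitive_iff.1 (Equiv.Perm.isMultiplyPretransitive ι 2) hij
        (ne_of_apply_ne v hab)
    have hmem := vsub_mem_vectorSpan K (s := {w | ∃ σ : Equiv.Perm ι, w = v ∘ σ})
      ⟨σ, rfl⟩ ⟨σ * Equiv.swap i j, rfl⟩
    rw [vsub_eq_sub, Equiv.Perm.coe_mul, ← Function.comp_assoc, sub_comp_swap] at hmem
    exact (Submodule.smul_mem_iff _ (sub_ne_zero.2 hab)).1 hmem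

end PermutationOrbit

lemma setDim_permPoly_of_const {n : ℕ} {v : Fin n → ℝ} (hv : ∀ i j, v i = v j) :
    setDim (permPoly v) = 0 := by
  rw [setDim, permPoly, affineSpan_convexHull, direction_affineSpan,
    vectorSpan_permOrbit_eq_bot hv, finrank_bot]

lemma vectorSpan_permPoly_eq_sumZeroSubmodule {n : ℕ} {v : Fin n → ℝ} {a b : Fin n}
    (hab : v a ≠ v b) : vectorSpan ℝ (permPoly v) = sumZeroSubmodule ℝ (Fin n) := by
  rw [permPoly, ← direction_affineSpan, affineSpan_convexHull, direction_affineSpan,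
    vectorSpan_permOrbit_eq_sumZeroSubmodule hab]

section MinkowskiSum

variable {R E : Type*} [Ring R] [AddCommGroup E] [Module R E]

lemma vectorSpan_add {s t : Set E} (hs : s.Nonempty) (ht : t.Nonempty) :
    vectorSpan R (s + t) = vectorSpan R s ⊔ vectorSpan R t := by
  obtain ⟨a, ha⟩ := hs
  obtain ⟨b, hb⟩ := ht
  refine le_antisymm ?_ (sup_le ?_ ?_)
  · rw [vectorSpan_def, Submodule.span_le]
    rintro _ ⟨_, ⟨x, hx, y, hy, rfl⟩, _, ⟨x', hx', y', hy', rfl⟩, rfl⟩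
    simp only [vsub_eq_sub, add_sub_add_comm]
    exact Submodule.add_mem_sup (vsub_mem_vectorSpan R hx hx') (vsub_mem_vectorSpan R hy hy')
  · rw [← vectorSpan_vadd R s b]
    refine vectorSpan_mono R ?_
    rintro _ ⟨x, hx, rfl⟩
    exact ⟨x, hx, b, hb, add_comm x b⟩
  · rw [← vectorSpan_vadd R t a]
    refine vectorSpan_mono R ?_
    rintro _ ⟨y, hy, rfl⟩
    exact ⟨a, ha, y, hy, rfl⟩

lemma vectorSpan_finsetSum {κ : Type*} (I : Finset κ) (s : κ → Set E)
    (hs : ∀ i ∈ I, (s i).Nonempty) :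
    vectorSpan R (∑ i ∈ I, s i) = ⨆ i ∈ I, vectorSpan R (s i) := by
  classical
  suffices (∑ i ∈ I, s i).Nonempty ∧
      vectorSpan R (∑ i ∈ I, s i) = ⨆ i ∈ I, vectorSpan R (s i) from this.2
  induction I using Finset.induction_on with
  | empty => simp [← Set.singleton_zero]
  | insert i I hi ih =>
    obtain ⟨hI, hspan⟩ := ih fun j hj ↦ hs j (Finset.mem_insert_of_mem hj)
    have hsi := hs i (Finset.mem_insert_self i I)
    rw [Finset.sum_insert hi, vectorSpan_add hsi hI, hspan, Finset.iSup_insert]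
    exact ⟨hsi.add hI, rfl⟩

end MinkowskiSum

section GeneralPermutahedron

variable {n : ℕ}

lemma single_mem_stdSimplexOn_s9 {F : Finset (Fin n)} {i : Fin n} (hi : i ∈ F) :
    Pi.single i 1 ∈ stdSimplexOn n F := by
  obtain ⟨hnonneg, hsum⟩ := single_mem_stdSimplex ℝ i
  exact ⟨hnonneg, fun j hj ↦ Pi.single_eq_of_ne (ne_of_mem_of_not_mem hi hj).symm 1, hsum⟩

lemma vectorSpan_stdSimplexOn_le (F : Finset (Fin n)) :
    vectorSpan ℝ (stdSimplexOn n F) ≤ sumZeroSubmodule ℝ (Fin n) :=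
  vectorSpan_le_sumZeroSubmodule fun _ hx ↦ hx.2.2

lemma vectorSpan_genPerm {k : ℕ} (hk : k ≠ 0) :
    vectorSpan ℝ (genPerm n k) =
      ⨆ F ∈ Finset.univ.powersetCard k, vectorSpan ℝ (stdSimplexOn n F) := by
  refine vectorSpan_finsetSum _ _ fun F hF ↦ ?_
  obtain ⟨i, hi⟩ : F.Nonempty := by
    rw [← Finset.card_ne_zero, (Finset.mem_powersetCard.1 hF).2]
    exact hk
  exact ⟨_, single_mem_stdSimplexOn_s9 hi⟩

lemma vectorSpan_genPerm_eq_sumZeroSubmodule {k : ℕ} (hk : 2 ≤ k) (hkn : k ≤ n) :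
    vectorSpan ℝ (genPerm n k) = sumZeroSubmodule ℝ (Fin n) := by
  rw [vectorSpan_genPerm (by omega)]
  refine le_antisymm (iSup₂_le fun F _ ↦ vectorSpan_stdSimplexOn_le F)
    (sumZeroSubmodule_le fun i j hij ↦ ?_)
  obtain ⟨F, hF, -, hcard⟩ := Finset.exists_subsuperset_card_eq (n := k)
    (Finset.subset_univ {i, j}) (by rwa [Finset.card_pair hij]) (by simpa using hkn)
  have hi : Pi.single i 1 ∈ stdSimplexOn n F := single_mem_stdSimplexOn_s9 (hF (by simp))
  have hj : Pi.single j 1 ∈ stdSimplexOn n F := single_mem_stdSimplexOn_s9 (hF (by simp))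
  exact Submodule.mem_iSup_of_mem F <| Submodule.mem_iSup_of_mem (by simp [hcard]) <|
    vsub_mem_vectorSpan ℝ hi hj

end GeneralPermutahedron

/-- P_{n−1}(v) has dimension 0 if v is constant, and n−1
otherwise; in particular Π_{n−1}(k−1) has dimension n−1 for 2 ≤ k ≤ n. -/
theorem dim_permPoly (n : ℕ) (hn : 1 ≤ n) (v : Fin n → ℝ) :
    (setDim (permPoly v) = if ∀ i j : Fin n, v i = v j then 0 else n - 1) ∧
    (∀ k : ℕ, 2 ≤ k → k ≤ n → setDim (genPerm n k) = n - 1) := by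
  refine ⟨?_, fun k hk hkn ↦ setDim_eq_sub_one hn (vectorSpan_genPerm_eq_sumZeroSubmodule hk hkn)⟩
  split_ifs with hv
  · exact setDim_permPoly_of_const hv
  · push Not at hv
    obtain ⟨a, b, hab⟩ := hv
    exact setDim_eq_sub_one hn (vectorSpan_permPoly_eq_sumZeroSubmodule hab)
end

section
/- Let v ∈ ℝ^n and let X_1, …, X_h be pairwise disjoint nonempty subsets of {0,…,n−1}. Let G be the set of permutations σ of {0,…,n−1} such that σ(X_i) = X_i for each i and σ fixes every element outside X_1 ∪ ⋯ ∪ X_h. Then the dimension of the convex hull of {v∘σ : σ ∈ G} equals ∑_{i=1}^{h} δ_{X_i}(v)·(|X_i| − 1), where δ_X(v) = 0 if v is constant on X and δ_X(v) = 1 otherwise. -/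
open Pointwise

/- The direction of the orbit of `v` is the internal direct sum, over the blocks `X i` on which `v`
is not constant, of the directions of the coordinate simplices on `X i`. On the one hand
`v ∘ σ - v` is supported on the blocks and has coordinate sum zero on each of them. On the other,
a transposition of two places `a`, `b` of a block with `v a ≠ v b` moves `v` by a nonzero multiple
of the edge `e_a - e_b`, and if `v a = v b`, two such edges through a place `c` with `v c ≠ v a`
make up `e_a - e_b`. -/

open Function Equiv Module

section Ring

variable {K V ι κ : Type*} [Ring K] [AddCommGroup V] [Module K V]

lemma vectorSpan_le_span (s : Set V) : vectorSpan K s ≤ Submodule.span K s := by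
  rw [vectorSpan_def, Submodule.span_le]
  rintro _ ⟨x, hx, y, hy, rfl⟩
  exact Submodule.sub_mem _ (Submodule.subset_span hx) (Submodule.subset_span hy)

lemma iSupIndep_vectorSpan_image {e : ι → V} (he : LinearIndependent K e) {X : κ → Set ι}
    (hX : Pairwise (Disjoint on X)) : iSupIndep fun i => vectorSpan K (e '' X i) := by
  intro i
  have hdisj : Disjoint (X i) (⋃ (j) (_ : j ≠ i), X j) :=
    Set.disjoint_iUnion₂_right.2 fun _ hj => hX hj.symm
  refine (he.disjoint_span_image hdisj).mono (vectorSpan_le_span _) ?_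
  exact iSup₂_le fun j hj => (vectorSpan_le_span _).trans <|
    Submodule.span_mono <| Set.image_mono <| Set.subset_biUnion_of_mem (u := X) hj

lemma sum_smul_mem_vectorSpan_image (e : ι → V) {s : Finset ι} {w : ι → K}
    (hw : ∑ x ∈ s, w x = 0) : ∑ x ∈ s, w x • e x ∈ vectorSpan K (e '' (s : Set ι)) := by
  obtain rfl | ⟨a, ha⟩ := s.eq_empty_or_nonempty
  · simp
  have hsum : ∑ x ∈ s, w x • e x = ∑ x ∈ s, w x • (e x -ᵥ e a) := by
    simp only [vsub_eq_sub, smul_sub, Finset.sum_sub_distrib, ← Finset.sum_smul, hw, zero_smul,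
      sub_zero]
  rw [hsum]
  exact Submodule.sum_mem _ fun x hx => Submodule.smul_mem _ _ <|
    vsub_mem_vectorSpan K (Set.mem_image_of_mem e hx) (Set.mem_image_of_mem e ha)

end Ring

section DivisionRing

variable {K V ι κ : Type*} [DivisionRing K] [AddCommGroup V] [Module K V]

lemma finrank_iSup_eq_sum_of_iSupIndep [Fintype κ] {p : κ → Submodule K V}
    [∀ i, FiniteDimensional K (p i)] (hp : iSupIndep p) :
    finrank K ↥(⨆ i, p i) = ∑ i, finrank K (p i) := by
  classical
  rw [Submodule.iSup_eq_range_dfinsupp_lsum,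
    LinearMap.finrank_range_of_inj hp.dfinsupp_lsum_injective]
  exact finrank_directSum (R := K) fun i => p i

lemma finrank_vectorSpan_image_finset {e : ι → V} (he : LinearIndependent K e) (s : Finset ι) :
    finrank K (vectorSpan K (e '' (s : Set ι))) = s.card - 1 := by
  classical
  obtain rfl | hs := s.eq_empty_or_nonempty
  · rw [Finset.coe_empty, Set.image_empty, vectorSpan_empty, finrank_bot, Finset.card_empty]
  · rw [← Finset.coe_image]
    exact he.affineIndependent.finrank_vectorSpan_image_finset
      (Nat.succ_pred_eq_of_pos hs.card_pos).symm

end DivisionRing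

section YoungSubgroup

variable {ι κ : Type*}

/-- The Young subgroup of a family of blocks: the permutations that preserve each block and fix
every point outside the blocks. The blocks need not cover `ι`. -/
def youngSubgroup (X : κ → Finset ι) : Subgroup (Perm ι) :=
  (⨅ i, MulAction.stabilizer (Perm ι) (X i : Set ι)) ⊓
    fixingSubgroup (Perm ι) {x | ∀ i, x ∉ X i}

lemma mem_youngSubgroup_iff {X : κ → Finset ι} {σ : Perm ι} :
    σ ∈ youngSubgroup X ↔
      (∀ i x, σ x ∈ X i ↔ x ∈ X i) ∧ ∀ x, (∀ i, x ∉ X i) → σ x = x := by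
  simp only [youngSubgroup, Subgroup.mem_inf, Subgroup.mem_iInf, MulAction.mem_stabilizer_set,
    mem_fixingSubgroup_iff, Perm.smul_def, Finset.mem_coe, Set.mem_ofPred_eq]

lemma mem_youngSubgroup_iff_image_eq [DecidableEq ι] {X : κ → Finset ι} {σ : Perm ι} :
    σ ∈ youngSubgroup X ↔
      (∀ i, (X i).image σ = X i) ∧ ∀ x, (∀ i, x ∉ X i) → σ x = x := by
  simp only [youngSubgroup, MulAction.stabilizer_coe_finset, Subgroup.mem_inf, Subgroup.mem_iInf,
    MulAction.mem_stabilizer_iff, mem_fixingSubgroup_iff, Perm.smul_def, Set.mem_ofPred_eq]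
  rfl

lemma swap_mem_youngSubgroup [DecidableEq ι] {X : κ → Finset ι} (hX : Pairwise (Disjoint on X))
    {i : κ} {a b : ι} (ha : a ∈ X i) (hb : b ∈ X i) : swap a b ∈ youngSubgroup X := by
  have hmem_iff : ∀ j, a ∈ X j ↔ b ∈ X j := by
    intro j
    obtain rfl | hij := eq_or_ne i j
    · simp only [ha, hb]
    · simp only [Finset.disjoint_left.1 (hX hij) ha, Finset.disjoint_left.1 (hX hij) hb]
  refine Subgroup.mem_inf.2 ⟨Subgroup.mem_iInf.2 fun j => swap_mem_stabilizer.2 (hmem_iff j), ?_⟩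
  refine (mem_fixingSubgroup_iff _).2 fun x hx => swap_apply_of_ne_of_ne ?_ ?_
  · rintro rfl
    exact hx i ha
  · rintro rfl
    exact hx i hb

end YoungSubgroup

section Coordinates

variable {K ι κ : Type*} [DecidableEq ι]

lemma comp_swap_sub_self [Ring K] (v : ι → K) (a b : ι) :
    v ∘ swap a b - v = (v b - v a) • (Pi.single a 1 - Pi.single b 1 : ι → K) := by
  ext x
  simp only [Pi.sub_apply, comp_apply, swap_apply_def, Pi.smul_apply, Pi.single_apply, smul_eq_mul]
  split_ifs <;> simp_all

lemma eq_sum_sum_smul_single [Semiring K] [Fintype κ] {X : κ → Finset ι}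
    (hX : Pairwise (Disjoint on X)) {f : ι → K} (hf : ∀ x, (∀ i, x ∉ X i) → f x = 0) :
    f = ∑ i, ∑ x ∈ X i, f x • (Pi.single x 1 : ι → K) := by
  rw [← Finset.sum_biUnion (hX.set_pairwise _)]
  ext y
  simpa [Finset.sum_apply, Pi.single_apply] using hf y

end Coordinates

section Orbit

variable {K ι κ : Type*} [DivisionRing K] [DecidableEq ι]

variable (K) in
/-- The direction of the coordinate simplex with vertices `e_x`, `x ∈ s`: the vectors supported on
`s` with coordinate sum zero. -/
def simplexDirection (s : Finset ι) : Submodule K (ι → K) :=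
  vectorSpan K ((fun x => (Pi.single x 1 : ι → K)) '' (s : Set ι))

instance (s : Finset ι) : FiniteDimensional K (simplexDirection K s) :=
  finiteDimensional_vectorSpan_of_finite K (s.finite_toSet.image _)

lemma finrank_simplexDirection (s : Finset ι) :
    finrank K (simplexDirection K s) = s.card - 1 :=
  finrank_vectorSpan_image_finset (Pi.linearIndependent_single_one ι K) s

variable {X : κ → Finset ι}

variable (K) in
lemma iSupIndep_simplexDirection (hX : Pairwise (Disjoint on X)) :
    iSupIndep fun i => simplexDirection K (X i) :=
  iSupIndep_vectorSpan_image (Pi.linearIndependent_single_one ι K)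
    fun _ _ hij => Finset.disjoint_coe.2 (hX hij)

lemma comp_sub_self_mem_iSup_simplexDirection [Finite κ] (hX : Pairwise (Disjoint on X)) (v : ι → K)
    {σ : Perm ι} (hσ : σ ∈ youngSubgroup X) :
    v ∘ σ - v ∈ ⨆ (i) (_ : ¬∀ a ∈ X i, ∀ b ∈ X i, v a = v b), simplexDirection K (X i) := by
  have := Fintype.ofFinite κ
  obtain ⟨hσX, hσfix⟩ := mem_youngSubgroup_iff.1 hσ
  have hsupp : ∀ x, (∀ i, x ∉ X i) → (v ∘ σ - v) x = 0 := fun x hx => by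
    rw [Pi.sub_apply, comp_apply, hσfix x hx, sub_self]
  rw [eq_sum_sum_smul_single hX hsupp]
  refine Submodule.sum_mem _ fun i _ => ?_
  by_cases hconst : ∀ a ∈ X i, ∀ b ∈ X i, v a = v b
  · have hzero : ∀ x ∈ X i, (v ∘ σ - v) x = 0 := fun x hx =>
      sub_eq_zero.2 (hconst _ ((hσX i x).2 hx) _ hx)
    rw [Finset.sum_eq_zero fun x hx => by rw [hzero x hx, zero_smul]]
    exact Submodule.zero_mem _
  · have hsum : ∑ x ∈ X i, (v ∘ σ - v) x = 0 := by
      simp only [Pi.sub_apply, comp_apply, Finset.sum_sub_distrib, sub_eq_zero]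
      exact Finset.sum_equiv σ (fun x => (hσX i x).symm) fun _ _ => rfl
    exact Submodule.mem_iSup_of_mem i <| Submodule.mem_iSup_of_mem hconst <|
      sum_smul_mem_vectorSpan_image _ hsum

lemma single_sub_single_mem_vectorSpan_orbit_of_ne (hX : Pairwise (Disjoint on X)) {v : ι → K}
    {i : κ} {a b : ι} (ha : a ∈ X i) (hb : b ∈ X i) (hab : v a ≠ v b) :
    (Pi.single a 1 - Pi.single b 1 : ι → K) ∈
      vectorSpan K ((fun σ : Perm ι => v ∘ σ) '' youngSubgroup X) := by
  rw [← Submodule.smul_mem_iff _ (sub_ne_zero.2 hab.symm), ← comp_swap_sub_self]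
  exact vsub_mem_vectorSpan K ⟨swap a b, swap_mem_youngSubgroup hX ha hb, rfl⟩
    ⟨1, one_mem _, rfl⟩

lemma single_sub_single_mem_vectorSpan_orbit (hX : Pairwise (Disjoint on X)) {v : ι → K} {i : κ}
    (hv : ¬∀ a ∈ X i, ∀ b ∈ X i, v a = v b) {a b : ι} (ha : a ∈ X i) (hb : b ∈ X i) :
    (Pi.single a 1 - Pi.single b 1 : ι → K) ∈
      vectorSpan K ((fun σ : Perm ι => v ∘ σ) '' youngSubgroup X) := by
  by_cases hab : v a = v b
  · obtain ⟨c, hc, hca⟩ : ∃ c ∈ X i, v c ≠ v a := by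
      by_contra! h
      exact hv fun x hx y hy => (h x hx).trans (h y hy).symm
    rw [← sub_add_sub_cancel _ (Pi.single c 1)]
    exact Submodule.add_mem _
      (single_sub_single_mem_vectorSpan_orbit_of_ne hX ha hc hca.symm)
      (single_sub_single_mem_vectorSpan_orbit_of_ne hX hc hb (hab ▸ hca))
  · exact single_sub_single_mem_vectorSpan_orbit_of_ne hX ha hb hab

lemma vectorSpan_orbit_youngSubgroup [Finite κ] (hX : Pairwise (Disjoint on X)) (v : ι → K) :
    vectorSpan K ((fun σ : Perm ι => v ∘ σ) '' youngSubgroup X) =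
      ⨆ (i) (_ : ¬∀ a ∈ X i, ∀ b ∈ X i, v a = v b), simplexDirection K (X i) := by
  apply le_antisymm
  · have hv : v ∈ (fun σ : Perm ι => v ∘ σ) '' youngSubgroup X := ⟨1, one_mem _, rfl⟩
    rw [vectorSpan_eq_span_vsub_set_right K hv, Submodule.span_le]
    rintro _ ⟨_, ⟨σ, hσ, rfl⟩, rfl⟩
    exact comp_sub_self_mem_iSup_simplexDirection hX v hσ
  · refine iSup₂_le fun i hv => ?_
    rw [simplexDirection, vectorSpan_def, Submodule.span_le]
    rintro _ ⟨_, ⟨a, ha, rfl⟩, _, ⟨b, hb, rfl⟩, rfl⟩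
    exact single_sub_single_mem_vectorSpan_orbit hX hv ha hb

theorem dim_convexHull_orbit_young_subgroup_general [Fintype κ]
    (hX : Pairwise (Disjoint on X)) (v : ι → K)
    [∀ i, Decidable (∀ a ∈ X i, ∀ b ∈ X i, v a = v b)] :
    finrank K (vectorSpan K {w : ι → K | ∃ σ : Perm ι,
        (∀ i, (X i).image σ = X i) ∧ (∀ x, (∀ i, x ∉ X i) → σ x = x) ∧ w = v ∘ σ}) =
      ∑ i, (if ∀ a ∈ X i, ∀ b ∈ X i, v a = v b then 0 else 1) * ((X i).card - 1) := by
  have horbit : {w : ι → K | ∃ σ : Perm ι,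
      (∀ i, (X i).image σ = X i) ∧ (∀ x, (∀ i, x ∉ X i) → σ x = x) ∧ w = v ∘ σ} =
      (fun σ : Perm ι => v ∘ σ) '' youngSubgroup X := by
    ext w
    simp only [Set.mem_ofPred_eq, Set.mem_image, SetLike.mem_coe, mem_youngSubgroup_iff_image_eq,
      and_assoc, eq_comm]
  have hindep : iSupIndep fun i =>
      ⨆ _ : ¬∀ a ∈ X i, ∀ b ∈ X i, v a = v b, simplexDirection K (X i) :=
    (iSupIndep_simplexDirection K hX).mono fun i => iSup_le fun _ => le_rfl
  rw [horbit, vectorSpan_orbit_youngSubgroup hX, finrank_iSup_eq_sum_of_iSupIndep hindep]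
  refine Finset.sum_congr rfl fun i _ => ?_
  split_ifs with hconst
  · rw [iSup_neg (not_not.2 hconst), finrank_bot, zero_mul]
  · rw [iSup_pos hconst, finrank_simplexDirection, one_mul]

end Orbit

/-- for pairwise disjoint nonempty X_1,…,X_h ⊆ {0,…,n−1} and the
group G of permutations stabilizing each X_i and fixing everything outside
their union, the dimension of conv{v∘σ : σ ∈ G} is
∑_i δ_{X_i}(v)·(|X_i|−1). -/
theorem dim_convexHull_orbit_young_subgroup (n h : ℕ) (v : Fin n → ℝ)
    (X : Fin h → Finset (Fin n)) (hne : ∀ i, (X i).Nonempty)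
    (hdisj : ∀ i j, i ≠ j → Disjoint (X i) (X j)) :
    setDim (convexHull ℝ {w : Fin n → ℝ | ∃ σ : Equiv.Perm (Fin n),
        (∀ i, (X i).image σ = X i) ∧ (∀ x : Fin n, (∀ i, x ∉ X i) → σ x = x) ∧
        w = v ∘ σ})
      = ∑ i : Fin h,
          (if ∀ a ∈ X i, ∀ b ∈ X i, v a = v b then 0 else 1) * ((X i).card - 1) := by
  rw [setDim, affineSpan_convexHull, direction_affineSpan]
  exact dim_convexHull_orbit_young_subgroup_general (fun i j => hdisj i j) v
end

section
/- Let v, c ∈ ℝ^n and let P = P_{n−1}(v). Then {x ∈ P : ∀ y ∈ P, c·y ≤ c·x} equals the convex hull of {v∘σ : σ a permutation of {0,…,n−1} such that for all i, j, c_i < c_j implies (v∘σ)_i ≤ (v∘σ)_j}, where c·x = ∑_{i=0}^{n−1} c_i x_i. -/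
open Pointwise

/- A linear functional attains its maximum over a convex hull on an extreme subset of the hull, and
an extreme convex subset is the hull of the generators it contains. So the face is spanned by the
maximizing orbit points `v ∘ σ`, and by the equality case of the rearrangement inequality these are
the ones ordered like `c`. -/

section ConvexHull

variable {𝕜 E β : Type*} [Semiring 𝕜] [PartialOrder 𝕜] [AddCommMonoid E] [Module 𝕜 E]

theorem subset_convexHull_inter_of_isExtreme {s B : Set E}
    (hB : IsExtreme 𝕜 (convexHull 𝕜 s) B) : B ⊆ convexHull 𝕜 (s ∩ B) := by
  suffices convexHull 𝕜 s ⊆ {x ∈ convexHull 𝕜 s | x ∈ B → x ∈ convexHull 𝕜 (s ∩ B)} from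
    fun x hx => (this (hB.subset hx)).2 hx
  refine convexHull_min
    (fun x hx => ⟨subset_convexHull 𝕜 s hx, fun hxB => subset_convexHull 𝕜 _ ⟨hx, hxB⟩⟩) ?_
  refine convex_iff_forall_pos.2 fun x hx y hy a b ha hb hab =>
    ⟨convex_convexHull 𝕜 s hx.1 hy.1 ha.le hb.le hab, fun hz => ?_⟩
  have hseg : a • x + b • y ∈ openSegment 𝕜 x y := ⟨a, b, ha, hb, hab, rfl⟩
  have hxB : x ∈ B := hB.left_mem_of_mem_openSegment hx.1 hy.1 hz hseg
  have hyB : y ∈ B := hB.right_mem_of_mem_openSegment hx.1 hy.1 hz hseg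
  exact convex_convexHull 𝕜 _ (hx.2 hxB) (hy.2 hyB) ha.le hb.le hab

theorem eq_convexHull_inter_of_isExtreme {s B : Set E} (hB : IsExtreme 𝕜 (convexHull 𝕜 s) B)
    (hconv : Convex 𝕜 B) : B = convexHull 𝕜 (s ∩ B) :=
  (subset_convexHull_inter_of_isExtreme hB).antisymm (convexHull_min Set.inter_subset_right hconv)

variable [AddCommMonoid β] [Module 𝕜 β]

theorem convex_setOf_isMaxOn [PartialOrder β] [IsOrderedAddMonoid β] [PosSMulMono 𝕜 β]
    {A : Set E} {f : E → β} (hf : ConcaveOn 𝕜 A f) : Convex 𝕜 {x ∈ A | IsMaxOn f A x} :=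
  fun _ hx _ hy _ _ ha hb hab => ⟨hf.1 hx.1 hy.1 ha hb hab, fun z hz =>
    (hf.convex_ge (f z) ⟨hx.1, hx.2 hz⟩ ⟨hy.1, hy.2 hz⟩ ha hb hab).2⟩

theorem isMaxOn_convexHull_iff [PartialOrder β] [IsOrderedAddMonoid β] [PosSMulMono 𝕜 β]
    {s : Set E} {f : E → β} (hf : ConvexOn 𝕜 (convexHull 𝕜 s) f) {x : E} :
    IsMaxOn f (convexHull 𝕜 s) x ↔ IsMaxOn f s x := by
  refine ⟨fun h => h.on_subset (subset_convexHull 𝕜 s), fun h y hy => ?_⟩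
  have hsub : convexHull 𝕜 s ⊆ {z ∈ convexHull 𝕜 s | f z ≤ f x} :=
    convexHull_min (fun z hz => ⟨subset_convexHull 𝕜 s hz, h hz⟩) (hf.convex_le (f x))
  exact (hsub hy).2

variable [LinearOrder β] [IsOrderedCancelAddMonoid β] [PosSMulStrictMono 𝕜 β]

theorem isExtreme_setOf_isMaxOn {A : Set E} {f : E → β} (hf : ConvexOn 𝕜 A f) :
    IsExtreme 𝕜 A {x ∈ A | IsMaxOn f A x} where
  subset := Set.sep_subset _ _
  left_mem_of_mem_openSegment _ hx _ hy _ hz hseg :=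
    ⟨hx, fun _ hu => (hz.2 hu).trans (hf.le_left_of_right_le hx hy hseg (hz.2 hy))⟩

theorem setOf_isMaxOn_convexHull (f : E →ₗ[𝕜] β) (s : Set E) :
    {x ∈ convexHull 𝕜 s | IsMaxOn f (convexHull 𝕜 s) x} =
      convexHull 𝕜 {x ∈ s | IsMaxOn f s x} := by
  have hconv : Convex 𝕜 (convexHull 𝕜 s) := convex_convexHull 𝕜 s
  rw [eq_convexHull_inter_of_isExtreme (isExtreme_setOf_isMaxOn (f.convexOn hconv))
    (convex_setOf_isMaxOn (f.concaveOn hconv))]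
  congr 1 with x
  have hmax := isMaxOn_convexHull_iff (f.convexOn hconv) (x := x)
  exact ⟨fun h => ⟨h.1, hmax.1 h.2.2⟩,
    fun h => ⟨h.1, subset_convexHull 𝕜 s h.1, hmax.2 h.2⟩⟩

end ConvexHull

section Rearrangement

open Equiv Matrix

theorem exists_perm_monovary_comp {ι α β : Type*} [Finite ι] [LinearOrder α] [LinearOrder β]
    (f : ι → α) (g : ι → β) : ∃ σ : Perm ι, Monovary (f ∘ σ) g := by
  obtain ⟨n, ⟨e⟩⟩ := Finite.exists_equiv_fin ι
  let p : Fin n ≃ ι := (Tuple.sort (f ∘ e.symm)).trans e.symm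
  let q : Fin n ≃ ι := (Tuple.sort (g ∘ e.symm)).trans e.symm
  have hf : Monotone (f ∘ p) := Tuple.monotone_sort (f ∘ e.symm)
  have hg : Monotone (g ∘ q) := Tuple.monotone_sort (g ∘ e.symm)
  refine ⟨q.symm.trans p, ?_⟩
  simpa [Function.comp_assoc] using (hf.monovary hg).comp_right q.symm

variable {ι 𝕜 : Type*} [Fintype ι] [Semiring 𝕜] [LinearOrder 𝕜] [IsStrictOrderedRing 𝕜]
  [ExistsAddOfLE 𝕜]

theorem forall_dotProduct_comp_perm_le_iff_monovary {c w : ι → 𝕜} :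
    (∀ σ : Perm ι, c ⬝ᵥ (w ∘ σ) ≤ c ⬝ᵥ w) ↔ Monovary w c := by
  refine ⟨fun hmax => ?_, fun h σ => h.symm.sum_mul_comp_perm_le_sum_mul⟩
  obtain ⟨τ, hτ⟩ := exists_perm_monovary_comp w c
  have hw : (w ∘ τ) ∘ τ.symm = w := by simp [Function.comp_assoc]
  have hle : c ⬝ᵥ ((w ∘ τ) ∘ τ.symm) ≤ c ⬝ᵥ (w ∘ τ) := hτ.symm.sum_mul_comp_perm_le_sum_mul
  have heq : c ⬝ᵥ ((w ∘ τ) ∘ τ.symm) = c ⬝ᵥ (w ∘ τ) := hle.antisymm (by rw [hw]; exact hmax τ)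
  have hmono : Monovary c ((w ∘ τ) ∘ τ.symm) := hτ.symm.sum_mul_comp_perm_eq_sum_mul_iff.1 heq
  rw [hw] at hmono
  exact hmono.symm

theorem isMaxOn_dotProduct_perm_orbit_iff {v c : ι → 𝕜} (σ : Perm ι) :
    IsMaxOn (c ⬝ᵥ ·) {w | ∃ τ : Perm ι, w = v ∘ τ} (v ∘ σ) ↔ Monovary (v ∘ σ) c := by
  rw [← forall_dotProduct_comp_perm_le_iff_monovary]
  refine ⟨fun h τ => h ⟨σ * τ, rfl⟩, ?_⟩
  rintro h _ ⟨τ, rfl⟩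
  simpa [Function.comp_assoc, ← Perm.coe_mul] using h (σ⁻¹ * τ)

theorem face_permPoly_eq_convexHull_general {ι 𝕜 : Type*} [Fintype ι] [CommSemiring 𝕜]
    [LinearOrder 𝕜] [IsStrictOrderedRing 𝕜] [ExistsAddOfLE 𝕜] (v c : ι → 𝕜) :
    {x ∈ convexHull 𝕜 {w | ∃ σ : Perm ι, w = v ∘ σ} |
      ∀ y ∈ convexHull 𝕜 {w | ∃ σ : Perm ι, w = v ∘ σ}, c ⬝ᵥ y ≤ c ⬝ᵥ x} =
      convexHull 𝕜 {w | ∃ σ : Perm ι, w = v ∘ σ ∧ Monovary w c} := by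
  refine (setOf_isMaxOn_convexHull (dotProductBilin 𝕜 𝕜 c) _).trans (congrArg _ ?_)
  ext w
  constructor
  · rintro ⟨⟨σ, rfl⟩, hmax⟩
    exact ⟨σ, rfl, (isMaxOn_dotProduct_perm_orbit_iff σ).1 hmax⟩
  · rintro ⟨σ, rfl, hmono⟩
    exact ⟨⟨σ, rfl⟩, (isMaxOn_dotProduct_perm_orbit_iff σ).2 hmono⟩

end Rearrangement

/-- the exposed face of P_{n−1}(v) determined by c is the convex
hull of the orbit points v∘σ whose coordinate order agrees with that of c. -/
theorem face_permPoly_eq_convexHull (n : ℕ) (v c : Fin n → ℝ) :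
    {x ∈ permPoly v | ∀ y ∈ permPoly v, ∑ i, c i * y i ≤ ∑ i, c i * x i}
      = convexHull ℝ {w : Fin n → ℝ | ∃ σ : Equiv.Perm (Fin n),
          w = v ∘ σ ∧ ∀ i j : Fin n, c i < c j → w i ≤ w j} := by
  exact face_permPoly_eq_convexHull_general v c
end

section
/- Let v, c ∈ ℝ^n satisfy: for all i, j, c_i < c_j implies v_i ≤ v_j. Let P = P_{n−1}(v) and F = {x ∈ P : ∀ y ∈ P, c·y ≤ c·x}, where c·x = ∑_{i=0}^{n−1} c_i x_i. Then F equals the convex hull of {v∘μ : μ a permutation of {0,…,n−1} with c∘μ = c}, and the dimension of F equals the sum, over the distinct values t of c, of δ_{X_t}(v)·(|X_t| − 1), where X_t = {i : c_i = t} and δ_X(v) = 0 if v is constant on X and δ_X(v) = 1 otherwise. -/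
open Pointwise

/-!
A linear functional is maximized on a convex hull exactly at the convex combinations of the
generators that maximize it. For the orbit of `v` these generators are, by the equality case of the
rearrangement inequality, the `v ∘ σ` that are ordered compatibly with `c`. Sorting `c` and `v`
simultaneously, and likewise `c` and `v ∘ σ`, gives the same sorted pair, so `v ∘ σ = v ∘ μ` with
`c ∘ μ = c`.

For the dimension, choose a representative `r i` in every fibre of `c`. On the one hand,
`v ∘ μ - v = ∑ i, (v (μ i) - v i) • (e_i - e_{r i})` whenever `c ∘ μ = c`, and the coefficients
vanish on the fibres where `v` is constant. On the other hand, transposing two indices of a fibre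
with distinct `v`-values shows that `e_i - e_j` is a direction of the face whenever `i` and `j` lie
in a common fibre on which `v` is not constant. So the vectors `e_i - e_{r i}`, with `i ≠ r i` in a
fibre where `v` is not constant, form a basis of the direction.
-/

section Maximizers

variable {𝕜 E : Type*} [Semiring 𝕜] [PartialOrder 𝕜] [IsStrictOrderedRing 𝕜]
  [AddCommMonoid E] [Module 𝕜 E]

lemma convex_setOf_maximizers (L : E →ₗ[𝕜] 𝕜) {s : Set E} (hs : Convex 𝕜 s) :
    Convex 𝕜 {x ∈ s | ∀ y ∈ s, L y ≤ L x} := by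
  have heq : {x ∈ s | ∀ y ∈ s, L y ≤ L x} = s ∩ ⋂ y ∈ s, {x | L y ≤ L x} := by
    ext; simp
  rw [heq]
  exact hs.inter (convex_iInter₂ fun y _ => convex_halfSpace_ge L.isLinear (L y))

lemma convex_setOf_le_and_mem_of_eq (L : E →ₗ[𝕜] 𝕜) (M : 𝕜) {C : Set E} (hC : Convex 𝕜 C) :
    Convex 𝕜 {x | L x ≤ M ∧ (L x = M → x ∈ C)} := by
  rw [convex_iff_forall_pos]
  rintro x ⟨hx, hxC⟩ y ⟨hy, hyC⟩ a b ha hb hab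
  have hax : a * L x ≤ a * M := mul_le_mul_of_nonneg_left hx ha.le
  have hby : b * L y ≤ b * M := mul_le_mul_of_nonneg_left hy hb.le
  have hM : M = a * M + b * M := by rw [← add_mul, hab, one_mul]
  simp only [Set.mem_ofPred_eq, map_add, map_smul, smul_eq_mul]
  refine ⟨(add_le_add hax hby).trans_eq hM.symm, fun heq => ?_⟩
  obtain ⟨haeq, hbeq⟩ := (add_eq_add_iff_eq_and_eq hax hby).1 (heq.trans hM)
  have hxM : L x = M := hx.eq_of_not_lt fun hlt => (mul_lt_mul_of_pos_left hlt ha).ne haeq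
  have hyM : L y = M := hy.eq_of_not_lt fun hlt => (mul_lt_mul_of_pos_left hlt hb).ne hbeq
  exact hC (hxC hxM) (hyC hyM) ha.le hb.le hab

lemma setOf_maximizers_convexHull (L : E →ₗ[𝕜] 𝕜) (s : Set E) :
    {x ∈ convexHull 𝕜 s | ∀ y ∈ convexHull 𝕜 s, L y ≤ L x} =
      convexHull 𝕜 {x ∈ s | ∀ y ∈ s, L y ≤ L x} := by
  apply Set.Subset.antisymm
  · rintro x ⟨hx, hmax⟩
    have hs : ∀ y ∈ s, L y ≤ L x := fun y hy => hmax y (subset_convexHull 𝕜 s hy)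
    set C := convexHull 𝕜 {b ∈ s | ∀ y ∈ s, L y ≤ L b}
    have hsub : s ⊆ {y | L y ≤ L x ∧ (L y = L x → y ∈ C)} := fun y hy =>
      ⟨hs y hy, fun hyx => subset_convexHull 𝕜 _ ⟨hy, fun z hz => (hs z hz).trans_eq hyx.symm⟩⟩
    have hconv := convex_setOf_le_and_mem_of_eq L (L x) (convex_convexHull 𝕜 _ : Convex 𝕜 C)
    exact (convexHull_min hsub hconv hx).2 rfl
  · refine convexHull_min ?_ (convex_setOf_maximizers L (convex_convexHull 𝕜 s))
    rintro b ⟨hb, hmax⟩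
    exact ⟨subset_convexHull 𝕜 s hb,
      fun y hy => convexHull_min hmax (convex_halfSpace_le L.isLinear (L b)) hy⟩

end Maximizers

/-- The orbit `{v ∘ μ : c ∘ μ = c}` of `v` under the permutations of the coordinates that stabilize
`c`, i.e. that map every fibre of `c` to itself. -/
def fiberPermOrbit {ι α κ : Type*} (c : ι → κ) (v : ι → α) : Set (ι → α) :=
  {w | ∃ μ : Equiv.Perm ι, c ∘ μ = c ∧ w = v ∘ μ}

/-- `v` is constant on `X`, i.e. `δ_X(v) = 0`; this holds in particular for `X = ∅`. -/
def IsConstOn {ι α : Type*} (v : ι → α) (X : Finset ι) : Prop :=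
  ∀ a ∈ X, ∀ b ∈ X, v a = v b

instance {ι α : Type*} [DecidableEq α] (v : ι → α) (X : Finset ι) : Decidable (IsConstOn v X) :=
  inferInstanceAs (Decidable (∀ a ∈ X, ∀ b ∈ X, v a = v b))

lemma exists_mem_apply_ne_of_not_isConstOn {ι α : Type*} {v : ι → α} {X : Finset ι}
    (h : ¬IsConstOn v X) (y : α) : ∃ k ∈ X, v k ≠ y := by
  by_contra! hy
  exact h fun a ha b hb => (hy a ha).trans (hy b hb).symm

lemma self_mem_fiberPermOrbit {ι α κ : Type*} (c : ι → κ) (v : ι → α) :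
    v ∈ fiberPermOrbit c v :=
  ⟨1, rfl, rfl⟩

lemma comp_swap_mem_fiberPermOrbit {ι α κ : Type*} [DecidableEq ι] {c : ι → κ} {i j : ι}
    (hc : c i = c j) (v : ι → α) : v ∘ Equiv.swap i j ∈ fiberPermOrbit c v := by
  refine ⟨Equiv.swap i j, ?_, rfl⟩
  rw [Equiv.comp_swap_eq_update, hc, Function.update_eq_self, ← hc, Function.update_eq_self]

section Rearrangement

lemma comp_equiv_eq_of_monotone {ι α : Type*} [PartialOrder α] {n : ℕ} {f : ι → α}
    {a b : Fin n ≃ ι} (ha : Monotone (f ∘ a)) (hb : Monotone (f ∘ b)) :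
    f ∘ a = f ∘ b := by
  have h := Tuple.unique_monotone (f := f ∘ a) (σ := 1) (τ := b.trans a.symm) ha
    (by simpa [Function.comp_assoc, Function.comp_def] using hb)
  simpa [Function.comp_def] using h

variable {ι α β : Type*} [LinearOrder α] [LinearOrder β] {v : ι → α} {c : ι → β}

lemma exists_equiv_fin_monotone_comp [Finite ι] (hvc : Monovary v c) :
    ∃ a : Fin (Nat.card ι) ≃ ι, Monotone (v ∘ a) ∧ Monotone (c ∘ a) := by
  have := Fintype.ofFinite ι
  obtain ⟨_, hv, hc⟩ := hvc.exists_monotone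
  let a := Fintype.orderIsoFinOfCardEq ι (Nat.card_eq_fintype_card (α := ι)).symm
  exact ⟨a.toEquiv, hv.comp a.monotone, hc.comp a.monotone⟩

lemma comp_perm_mem_fiberPermOrbit_iff [Finite ι] (hvc : Monovary v c) (σ : Equiv.Perm ι) :
    v ∘ σ ∈ fiberPermOrbit c v ↔ Monovary (v ∘ σ) c := by
  constructor
  · rintro ⟨μ, hμ, hσ⟩ i j hij
    rw [hσ]
    exact hvc (by rwa [← hμ] at hij)
  · intro hσ
    obtain ⟨a, hva, hca⟩ := exists_equiv_fin_monotone_comp hvc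
    obtain ⟨b, hvb, hcb⟩ := exists_equiv_fin_monotone_comp hσ
    have hc : c ∘ a = c ∘ b := comp_equiv_eq_of_monotone hca hcb
    have hv : v ∘ a = v ∘ (b.trans σ) := comp_equiv_eq_of_monotone hva hvb
    refine ⟨b.symm.trans a, ?_, ?_⟩
    · funext i
      simpa using congrFun hc (b.symm i)
    · funext i
      simpa using (congrFun hv (b.symm i)).symm

end Rearrangement

section Face

variable {ι 𝕜 : Type*} [Fintype ι] [CommRing 𝕜] [LinearOrder 𝕜] [IsStrictOrderedRing 𝕜]
  {v c : ι → 𝕜}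

lemma setOf_maximizers_permOrbit (hvc : Monovary v c) :
    {w ∈ {w | ∃ σ : Equiv.Perm ι, w = v ∘ σ} |
        ∀ y ∈ {w | ∃ σ : Equiv.Perm ι, w = v ∘ σ}, ∑ i, c i * y i ≤ ∑ i, c i * w i} =
      fiberPermOrbit c v := by
  have hle : ∀ σ : Equiv.Perm ι, ∑ i, c i * v (σ i) ≤ ∑ i, c i * v i := fun σ => by
    simpa only [mul_comm] using hvc.sum_comp_perm_mul_le_sum_mul (σ := σ)
  have heq : ∀ σ : Equiv.Perm ι, ∑ i, c i * v (σ i) = ∑ i, c i * v i ↔ Monovary (v ∘ σ) c :=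
    fun σ => by simpa only [mul_comm] using hvc.sum_comp_perm_mul_eq_sum_mul_iff (σ := σ)
  ext w
  constructor
  · rintro ⟨⟨σ, rfl⟩, hmax⟩
    exact (comp_perm_mem_fiberPermOrbit_iff hvc σ).2
      ((heq σ).1 ((hle σ).antisymm (hmax v ⟨1, rfl⟩)))
  · rintro ⟨μ, hμ, rfl⟩
    refine ⟨⟨μ, rfl⟩, ?_⟩
    rintro _ ⟨σ, rfl⟩
    exact (hle σ).trans_eq
      ((heq μ).2 ((comp_perm_mem_fiberPermOrbit_iff hvc μ).1 ⟨μ, hμ, rfl⟩)).symm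

lemma setOf_maximizers_convexHull_permOrbit (hvc : Monovary v c) :
    {x ∈ convexHull 𝕜 {w | ∃ σ : Equiv.Perm ι, w = v ∘ σ} |
        ∀ y ∈ convexHull 𝕜 {w | ∃ σ : Equiv.Perm ι, w = v ∘ σ},
          ∑ i, c i * y i ≤ ∑ i, c i * x i} =
      convexHull 𝕜 (fiberPermOrbit c v) := by
  rw [← setOf_maximizers_permOrbit hvc]
  exact setOf_maximizers_convexHull (dotProductBilin 𝕜 𝕜 c) _

end Face

section FiberRep

variable {ι κ : Type*} {c : ι → κ}

/-- A chosen representative of the fibre of `c` through `i`. -/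
noncomputable def fiberRep (c : ι → κ) (i : ι) : ι :=
  Set.rangeSplitting c (Set.rangeFactorization c i)

lemma apply_fiberRep (c : ι → κ) (i : ι) : c (fiberRep c i) = c i :=
  Set.apply_rangeSplitting c _

lemma fiberRep_congr {i j : ι} (h : c i = c j) : fiberRep c i = fiberRep c j :=
  congrArg (Set.rangeSplitting c) (Subtype.ext h)

lemma fiberRep_fiberRep (c : ι → κ) (i : ι) : fiberRep c (fiberRep c i) = fiberRep c i :=
  fiberRep_congr (apply_fiberRep c i)

end FiberRep

section Pivots

variable {ι κ α : Type*} [Fintype ι] [DecidableEq κ] [DecidableEq α]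

open scoped Classical in
/-- The indices `i` for which `e_i - e_{fiberRep c i}` runs through a basis of the direction of
the affine span of `fiberPermOrbit c v`. -/
noncomputable def pivots (c : ι → κ) (v : ι → α) : Finset ι :=
  {i | ¬IsConstOn v {k | c k = c i} ∧ fiberRep c i ≠ i}

lemma mem_pivots {c : ι → κ} {v : ι → α} {i : ι} :
    i ∈ pivots c v ↔ ¬IsConstOn v {k | c k = c i} ∧ fiberRep c i ≠ i := by
  simp only [pivots, Finset.mem_filter_univ]

lemma card_filter_pivots (c : ι → κ) (v : ι → α) (k : ι) :
    ({i ∈ pivots c v | c i = c k} : Finset ι).card =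
      (if IsConstOn v {i | c i = c k} then 0 else 1) *
        (({i | c i = c k} : Finset ι).card - 1) := by
  classical
  split_ifs with hconst
  · rw [zero_mul, Finset.card_eq_zero, Finset.filter_eq_empty_iff]
    intro i hi hik
    exact (mem_pivots.1 hi).1 (by rwa [hik])
  · have hrep : ({i ∈ pivots c v | c i = c k} : Finset ι) =
        ({i | c i = c k} : Finset ι).erase (fiberRep c k) := by
      ext i
      simp only [Finset.mem_filter, mem_pivots, Finset.mem_erase, Finset.mem_univ, true_and]
      constructor
      · rintro ⟨⟨-, hrep⟩, hik⟩
        exact ⟨fun h => hrep ((fiberRep_congr hik).trans h.symm), hik⟩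
      · rintro ⟨hrep, hik⟩
        rw [hik, fiberRep_congr hik]
        exact ⟨⟨hconst, Ne.symm hrep⟩, rfl⟩
    rw [hrep, Finset.card_erase_of_mem (by simp [apply_fiberRep]), one_mul]

end Pivots

section SingleSubSingle

variable {ι R : Type*} [DecidableEq ι] [Ring R]

lemma linearIndepOn_single_sub_single {r : ι → ι} (hr : ∀ i, r (r i) = r i) :
    LinearIndepOn R (fun i => (Pi.single i 1 - Pi.single (r i) 1 : ι → R)) {i | r i ≠ i} := by
  -- Restricted to the coordinates moved by `r`, the vector `e_i - e_{r i}` becomes `e_i`.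
  refine LinearIndependent.of_comp (LinearMap.funLeft R R ((↑) : {i | r i ≠ i} → ι)) ?_
  convert Pi.linearIndependent_single_one {i | r i ≠ i} R using 1
  ext i k
  have hk : (k : ι) ≠ r i := fun h => k.2 (by rw [h, hr])
  simp [LinearMap.funLeft_apply, Pi.single_apply, hk, Subtype.ext_iff]

lemma comp_perm_sub_eq_sum [Fintype ι] {κ : Type*} {c : ι → κ}
    {μ : Equiv.Perm ι} (hμ : c ∘ μ = c) (v : ι → R) :
    v ∘ μ - v =
      ∑ i, (v (μ i) - v i) • (Pi.single i 1 - Pi.single (fiberRep c i) 1 : ι → R) := by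
  have hrep : ∑ i, v (μ i) • (Pi.single (fiberRep c i) 1 : ι → R) =
      ∑ i, v i • (Pi.single (fiberRep c i) 1 : ι → R) := by
    rw [← Equiv.sum_comp μ (fun i => v i • (Pi.single (fiberRep c i) 1 : ι → R))]
    refine Finset.sum_congr rfl fun i _ => ?_
    rw [fiberRep_congr (c := c) (i := μ i) (congrFun hμ i)]
  simp only [smul_sub, sub_smul, Finset.sum_sub_distrib, hrep, sub_self, sub_zero]
  ext k
  simp [Finset.sum_apply, Pi.single_apply]

end SingleSubSingle

section Direction

variable {ι κ 𝕜 : Type*} [DecidableEq ι] [DivisionRing 𝕜] {c : ι → κ} {v : ι → 𝕜}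

lemma single_sub_single_mem_vectorSpan_of_ne {i j : ι} (hc : c i = c j) (hv : v i ≠ v j) :
    (Pi.single i 1 - Pi.single j 1 : ι → 𝕜) ∈ vectorSpan 𝕜 (fiberPermOrbit c v) := by
  have hij : i ≠ j := ne_of_apply_ne v hv
  have hsub : v ∘ Equiv.swap i j - v =
      (v j - v i) • (Pi.single i 1 - Pi.single j 1 : ι → 𝕜) := by
    ext k
    rcases eq_or_ne k i with rfl | hki
    · simp [hij]
    rcases eq_or_ne k j with rfl | hkj
    · simp [hij.symm]
    · simp [hki, hkj, Equiv.swap_apply_of_ne_of_ne]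
  rw [← Submodule.smul_mem_iff _ (sub_ne_zero.2 hv.symm), ← hsub]
  exact vsub_mem_vectorSpan 𝕜 (comp_swap_mem_fiberPermOrbit hc v) (self_mem_fiberPermOrbit c v)

variable [Fintype ι] [DecidableEq κ]

lemma single_sub_single_mem_vectorSpan {i j : ι} (hc : c i = c j)
    (hconst : ¬IsConstOn v {k | c k = c i}) :
    (Pi.single i 1 - Pi.single j 1 : ι → 𝕜) ∈ vectorSpan 𝕜 (fiberPermOrbit c v) := by
  by_cases hv : v i = v j
  · obtain ⟨k, hk, hvk⟩ := exists_mem_apply_ne_of_not_isConstOn hconst (v i)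
    have hck : c k = c i := (Finset.mem_filter_univ k).1 hk
    simpa using add_mem (single_sub_single_mem_vectorSpan_of_ne hck.symm hvk.symm)
      (single_sub_single_mem_vectorSpan_of_ne (hck.trans hc) (hv ▸ hvk))
  · exact single_sub_single_mem_vectorSpan_of_ne hc hv

variable [DecidableEq 𝕜]

lemma vectorSpan_fiberPermOrbit (c : ι → κ) (v : ι → 𝕜) :
    vectorSpan 𝕜 (fiberPermOrbit c v) = Submodule.span 𝕜
      ((fun i => (Pi.single i 1 - Pi.single (fiberRep c i) 1 : ι → 𝕜)) '' pivots c v) := by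
  apply le_antisymm
  · rw [vectorSpan_eq_span_vsub_set_right 𝕜 (self_mem_fiberPermOrbit c v), Submodule.span_le]
    rintro _ ⟨_, ⟨μ, hμ, rfl⟩, rfl⟩
    simp only [vsub_eq_sub, comp_perm_sub_eq_sum hμ v]
    refine Submodule.sum_mem _ fun i _ => ?_
    by_cases hconst : IsConstOn v {k | c k = c i}
    · have hv : v (μ i) = v i := hconst _ (by simpa using congrFun hμ i) _ (by simp)
      simp [hv]
    by_cases hrep : fiberRep c i = i
    · simp [hrep]
    · exact Submodule.smul_mem _ _
        (Submodule.subset_span (Set.mem_image_of_mem _ (mem_pivots.2 ⟨hconst, hrep⟩)))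
  · rw [Submodule.span_le]
    rintro _ ⟨i, hi, rfl⟩
    exact single_sub_single_mem_vectorSpan (apply_fiberRep c i).symm (mem_pivots.1 hi).1

end Direction

section Dimension

variable {ι κ 𝕜 : Type*} [Fintype ι] [DecidableEq κ] [DivisionRing 𝕜] [DecidableEq 𝕜]

lemma finrank_vectorSpan_fiberPermOrbit_eq_card_pivots (c : ι → κ) (v : ι → 𝕜) :
    Module.finrank 𝕜 (vectorSpan 𝕜 (fiberPermOrbit c v)) = (pivots c v).card := by
  classical
  have hindep : LinearIndepOn 𝕜
      (fun i => (Pi.single i 1 - Pi.single (fiberRep c i) 1 : ι → 𝕜)) (pivots c v) :=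
    (linearIndepOn_single_sub_single (fiberRep_fiberRep c)).mono
      fun i hi => (mem_pivots.1 hi).2
  rw [vectorSpan_fiberPermOrbit, Set.image_eq_range]
  exact (finrank_span_eq_card hindep).trans (Fintype.card_coe _)

lemma finrank_vectorSpan_fiberPermOrbit (c : ι → κ) (v : ι → 𝕜) :
    Module.finrank 𝕜 (vectorSpan 𝕜 (fiberPermOrbit c v)) =
      ∑ t ∈ Finset.univ.image c,
        (if IsConstOn v {i | c i = t} then 0 else 1) * (({i | c i = t} : Finset ι).card - 1) := by
  rw [finrank_vectorSpan_fiberPermOrbit_eq_card_pivots,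
    Finset.card_eq_sum_card_fiberwise (f := c) (t := Finset.univ.image c) fun i _ => by simp]
  refine Finset.sum_congr rfl fun t ht => ?_
  obtain ⟨k, -, rfl⟩ := Finset.mem_image.1 ht
  exact card_filter_pivots c v k

end Dimension

theorem face_permPoly_stabilizer_and_dim_general {ι 𝕜 : Type*} [Fintype ι] [Field 𝕜]
    [LinearOrder 𝕜] [IsStrictOrderedRing 𝕜] {v c : ι → 𝕜} (hvc : Monovary v c) :
    ({x ∈ convexHull 𝕜 {w | ∃ σ : Equiv.Perm ι, w = v ∘ σ} |
        ∀ y ∈ convexHull 𝕜 {w | ∃ σ : Equiv.Perm ι, w = v ∘ σ},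
          ∑ i, c i * y i ≤ ∑ i, c i * x i} =
      convexHull 𝕜 (fiberPermOrbit c v)) ∧
    Module.finrank 𝕜 (affineSpan 𝕜 {x ∈ convexHull 𝕜 {w | ∃ σ : Equiv.Perm ι, w = v ∘ σ} |
        ∀ y ∈ convexHull 𝕜 {w | ∃ σ : Equiv.Perm ι, w = v ∘ σ},
          ∑ i, c i * y i ≤ ∑ i, c i * x i}).direction =
      ∑ t ∈ Finset.univ.image c,
        (if IsConstOn v {i | c i = t} then 0 else 1) * (({i | c i = t} : Finset ι).card - 1) := by
  classical
  have hface := setOf_maximizers_convexHull_permOrbit hvc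
  refine ⟨hface, ?_⟩
  rw [hface, affineSpan_convexHull, direction_affineSpan, finrank_vectorSpan_fiberPermOrbit]

/-- if the order of v agrees with that of c, the exposed face of
P_{n−1}(v) determined by c is conv{v∘μ : c∘μ = c}, and its dimension is
∑_t δ_{X_t}(v)·(|X_t|−1), summed over the distinct values t of c,
where X_t = {i : c_i = t}. -/
theorem face_permPoly_stabilizer_and_dim (n : ℕ) (v c : Fin n → ℝ)
    (hvc : ∀ i j : Fin n, c i < c j → v i ≤ v j) :
    ({x ∈ permPoly v | ∀ y ∈ permPoly v, ∑ i, c i * y i ≤ ∑ i, c i * x i}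
      = convexHull ℝ {w : Fin n → ℝ | ∃ μ : Equiv.Perm (Fin n),
          c ∘ μ = c ∧ w = v ∘ μ}) ∧
    setDim {x ∈ permPoly v | ∀ y ∈ permPoly v, ∑ i, c i * y i ≤ ∑ i, c i * x i}
      = ∑ t ∈ Finset.univ.image c,
          (if ∀ a ∈ Finset.univ.filter (fun i => c i = t),
              ∀ b ∈ Finset.univ.filter (fun i => c i = t), v a = v b then 0 else 1)
            * ((Finset.univ.filter (fun i => c i = t)).card - 1) := by
  obtain ⟨hface, hdim⟩ := face_permPoly_stabilizer_and_dim_general fun i j => hvc i j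
  -- The two right-hand sides differ in the `Decidable` instance of the `if`.
  exact ⟨hface, hdim.trans (by congr!)⟩
end
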